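/- For every finite-volume non-compact right-angled convex hyperbolic 5-polyhedron P, one has ν(P) = a₄(P) + v_∞(P) ≥ 26; in particular ν₅ ≥ 26. -/

import Mathlib

open scoped BigOperators

noncomputable section

/-- The Minkowski bilinear form `⟨x,y⟩ = -x₀y₀ + x₁y₁ + ⋯ + xₙyₙ` on `ℝ^{n+1}`. -/
def mink {n : ℕ} (x y : Fin (n + 1) → ℝ) : ℝ :=
  -(x 0 * y 0) + ∑ i : Fin n, x i.succ * y i.succ

/-- The hyperboloid model of the hyperbolic space `ℍⁿ`. -/
def Hyperboloid (n : ℕ) : Set (Fin (n + 1) → ℝ) :=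
  {x | mink x x = -1 ∧ 0 < x 0}

/-- The Klein projection `x ↦ (x₁/x₀, …, xₙ/x₀)` of the hyperboloid onto the unit ball. -/
def kleinMap {n : ℕ} (x : Fin (n + 1) → ℝ) : EuclideanSpace ℝ (Fin n) :=
  WithLp.toLp 2 fun i => x i.succ / x 0

/-- Dimension of a subset of a real vector space: the rank of its vector span. -/
def sdim {n : ℕ} (s : Set (EuclideanSpace ℝ (Fin n))) : ℕ :=
  Module.finrank ℝ (vectorSpan ℝ s)

/-- A convex hyperbolic `n`-polyhedron: a finite intersection of hyperbolic half-spaces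
`H_{eᵢ}⁻ = {x : ⟨eᵢ,x⟩ ≤ 0}` (with `⟨eᵢ,eᵢ⟩ = 1`) having nonempty interior
(equivalently, its Klein-model image has nonempty interior in `ℝⁿ`). -/
structure HypPolyhedron (n : ℕ) where
  m : ℕ
  e : Fin m → (Fin (n + 1) → ℝ)
  unit : ∀ i, mink (e i) (e i) = 1
  nonempty_int :
    (interior (kleinMap '' {x ∈ Hyperboloid n | ∀ i, mink (e i) x ≤ 0})).Nonempty

namespace HypPolyhedron

variable {n : ℕ} (P : HypPolyhedron n)

/-- The set of points of the polyhedron in the hyperboloid model. -/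
def carrier : Set (Fin (n + 1) → ℝ) :=
  {x ∈ Hyperboloid n | ∀ i, mink (P.e i) x ≤ 0}

/-- `P̄`: the closure of the Klein-model image of the polyhedron in the closed unit ball. -/
def cl : Set (EuclideanSpace ℝ (Fin n)) :=
  closure (kleinMap '' P.carrier)

/-- The `k`-faces of `P`: the `k`-dimensional (nonempty) exposed faces of `P̄`. -/
def faces (k : ℕ) : Set (Set (EuclideanSpace ℝ (Fin n))) :=
  {F | IsExposed ℝ P.cl F ∧ F.Nonempty ∧ sdim F = k}

/-- `a_k(P)`: the number of `k`-faces of `P`. -/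
def a (k : ℕ) : ℕ := (P.faces k).ncard

/-- Vertices of `P`: the points of `0`-dimensional exposed faces of `P̄`. -/
def verts : Set (EuclideanSpace ℝ (Fin n)) :=
  {v | IsExposed ℝ P.cl {v}}

/-- Ideal vertices: vertices lying on the unit sphere. -/
def idealVerts : Set (EuclideanSpace ℝ (Fin n)) :=
  {v ∈ P.verts | ‖v‖ = 1}

/-- Finite vertices: vertices lying in the open unit ball. -/
def finiteVerts : Set (EuclideanSpace ℝ (Fin n)) :=
  {v ∈ P.verts | ‖v‖ < 1}

/-- `v_∞(P)`: the number of ideal vertices of `P`. -/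
def vInf : ℕ := P.idealVerts.ncard

/-- The bounding hyperplane `H_e` contains the face `F`. -/
def faceInHyperplane (e : Fin (n + 1) → ℝ) (F : Set (EuclideanSpace ℝ (Fin n))) : Prop :=
  ∀ x ∈ P.carrier, kleinMap x ∈ F → mink e x = 0

/-- `P` is right-angled: whenever two distinct bounding hyperplanes both contain an
`(n-2)`-dimensional face of `P`, the corresponding unit normals are orthogonal,
i.e. the dihedral angle is `π/2`. -/
def IsRightAngled : Prop :=
  ∀ i j : Fin P.m, i ≠ j →
    (∃ F ∈ P.faces (n - 2), P.faceInHyperplane (P.e i) F ∧ P.faceInHyperplane (P.e j) F) →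
    mink (P.e i) (P.e j) = 0

/-- `P` has finite volume: `P̄` is the convex hull of its (finitely many) vertices. -/
def FiniteVolume : Prop :=
  P.verts.Finite ∧ P.cl = convexHull ℝ P.verts

/-- `P` is compact: finite volume and all vertices are finite. -/
def IsCompactPoly : Prop :=
  P.FiniteVolume ∧ ∀ v ∈ P.verts, ‖v‖ < 1

/-- `P` is ideal: finite volume and all vertices are ideal. -/
def IsIdeal : Prop :=
  P.FiniteVolume ∧ ∀ v ∈ P.verts, ‖v‖ = 1

end HypPolyhedron

/-- `ν(P) = a_{n-1}(P) + v_∞(P)` ranging over the family `𝒫ⁿ` of finite-volume non-compact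
right-angled convex hyperbolic `n`-polyhedra. -/
def nuSet (n : ℕ) : Set ℕ :=
  {m | ∃ P : HypPolyhedron n,
        P.FiniteVolume ∧ P.IsRightAngled ∧ ¬ P.IsCompactPoly ∧ P.a (n - 1) + P.vInf = m}

/-- `νₙ = sInf {ν(P) : P ∈ 𝒫ⁿ}` (with `sInf ∅ = 0`). -/
def nu (n : ℕ) : ℕ := sInf (nuSet n)

section Minkowski

variable {n : ℕ}

/-- The spatial part of a vector of Minkowski space. -/
def spat (x : Fin (n + 1) → ℝ) : EuclideanSpace ℝ (Fin n) :=
  WithLp.toLp 2 fun i => x i.succ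

/-- The point of Minkowski space at height one over a point of the Klein model. -/
def lift (y : EuclideanSpace ℝ (Fin n)) : Fin (n + 1) → ℝ :=
  Fin.cons 1 fun i => y i

/-- The open forward light cone. -/
def ForwardCone (n : ℕ) : Set (Fin (n + 1) → ℝ) :=
  {x | mink x x < 0 ∧ 0 < x 0}

lemma mink_eq_inner (x y : Fin (n + 1) → ℝ) :
    mink x y = -(x 0 * y 0) + inner ℝ (spat x) (spat y) := by
  simp [mink, spat, PiLp.inner_apply, mul_comm]

lemma mink_comm (x y : Fin (n + 1) → ℝ) : mink x y = mink y x := by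
  simp [mink, mul_comm]

lemma mink_add_right (x y z : Fin (n + 1) → ℝ) : mink x (y + z) = mink x y + mink x z := by
  simp only [mink, Pi.add_apply, mul_add, Finset.sum_add_distrib]; ring

lemma mink_smul_right (c : ℝ) (x y : Fin (n + 1) → ℝ) : mink x (c • y) = c * mink x y := by
  simp only [mink, Pi.smul_apply, smul_eq_mul, mul_add, Finset.mul_sum]
  congr 1
  · ring
  · exact Finset.sum_congr rfl fun i _ => by ring

/-- The Minkowski pairing with a fixed vector, as a linear functional. -/
def minkForm (e : Fin (n + 1) → ℝ) : (Fin (n + 1) → ℝ) →ₗ[ℝ] ℝ where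
  toFun := mink e
  map_add' := mink_add_right e
  map_smul' c x := mink_smul_right c e x

@[simp] lemma minkForm_apply (e x : Fin (n + 1) → ℝ) : minkForm e x = mink e x := rfl

lemma mink_sub_right (x y z : Fin (n + 1) → ℝ) : mink x (y - z) = mink x y - mink x z :=
  map_sub (minkForm x) y z

lemma mink_neg_right (x y : Fin (n + 1) → ℝ) : mink x (-y) = -mink x y :=
  map_neg (minkForm x) y

lemma mink_sum_right {ι : Type*} (s : Finset ι) (x : Fin (n + 1) → ℝ)
    (y : ι → Fin (n + 1) → ℝ) : mink x (∑ i ∈ s, y i) = ∑ i ∈ s, mink x (y i) :=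
  map_sum (minkForm x) y s

lemma mink_add_left (x y z : Fin (n + 1) → ℝ) : mink (x + y) z = mink x z + mink y z := by
  rw [mink_comm, mink_add_right, mink_comm z x, mink_comm z y]

lemma mink_smul_left (c : ℝ) (x y : Fin (n + 1) → ℝ) : mink (c • x) y = c * mink x y := by
  rw [mink_comm, mink_smul_right, mink_comm y x]

lemma mink_sub_left (x y z : Fin (n + 1) → ℝ) : mink (x - y) z = mink x z - mink y z := by
  rw [mink_comm, mink_sub_right, mink_comm z x, mink_comm z y]

lemma mink_neg_left (x y : Fin (n + 1) → ℝ) : mink (-x) y = -mink x y := by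
  rw [mink_comm, mink_neg_right, mink_comm y x]

lemma mink_sum_left {ι : Type*} (s : Finset ι) (x : Fin (n + 1) → ℝ)
    (y : ι → Fin (n + 1) → ℝ) : mink (∑ i ∈ s, y i) x = ∑ i ∈ s, mink (y i) x := by
  rw [mink_comm, mink_sum_right]
  exact Finset.sum_congr rfl fun i _ => mink_comm _ _

lemma continuous_mink (e : Fin (n + 1) → ℝ) : Continuous fun x => mink e x := by
  unfold mink; fun_prop

lemma continuous_mink_self : Continuous fun x : Fin (n + 1) → ℝ => mink x x := by
  unfold mink; fun_prop

lemma isOpen_forwardCone : IsOpen (ForwardCone n) :=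
  (isOpen_lt continuous_mink_self continuous_const).inter
    (isOpen_lt continuous_const (continuous_apply 0))

lemma norm_spat_le {x : Fin (n + 1) → ℝ} (hx : mink x x ≤ 0) (h0 : 0 ≤ x 0) :
    ‖spat x‖ ≤ x 0 := by
  rw [mink_eq_inner, real_inner_self_eq_norm_sq] at hx
  exact le_of_sq_le_sq (by nlinarith) h0

lemma norm_spat_lt {x : Fin (n + 1) → ℝ} (hx : x ∈ ForwardCone n) : ‖spat x‖ < x 0 := by
  have := hx.1
  rw [mink_eq_inner, real_inner_self_eq_norm_sq] at this
  exact lt_of_pow_lt_pow_left₀ 2 hx.2.le (by nlinarith)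

lemma mink_neg_of_causal {x y : Fin (n + 1) → ℝ} (hx : mink x x ≤ 0) (hx0 : 0 < x 0)
    (hy : y ∈ ForwardCone n) : mink x y < 0 := by
  have h1 := norm_spat_le hx hx0.le
  have h2 := norm_spat_lt hy
  have h3 := real_inner_le_norm (spat x) (spat y)
  rw [mink_eq_inner]
  nlinarith [norm_nonneg (spat x), norm_nonneg (spat y), hy.2]

lemma mem_forwardCone_of_mink_neg {y z : Fin (n + 1) → ℝ} (hz : z ∈ ForwardCone n)
    (hy : mink y y < 0) (hyz : mink y z < 0) : y ∈ ForwardCone n := by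
  refine ⟨hy, ?_⟩
  by_contra h
  have hne : y 0 ≠ 0 := fun h0 => by
    rw [mink_eq_inner, h0, real_inner_self_eq_norm_sq] at hy
    nlinarith [sq_nonneg ‖spat y‖]
  have hneg : 0 < (-y) 0 := by
    simp only [Pi.neg_apply]
    have := lt_of_le_of_ne (not_lt.1 h) hne
    linarith
  have := mink_neg_of_causal (x := -y) (by simpa [mink_neg_left, mink_neg_right] using hy.le)
    hneg hz
  rw [mink_neg_left] at this
  linarith

/-- A causal vector pairing negatively with a forward timelike one points forward. -/
lemma zero_coord_pos_of_mink_neg {y z : Fin (n + 1) → ℝ} (hz : z ∈ ForwardCone n)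
    (hy : mink y y ≤ 0) (hyz : mink y z < 0) : 0 < y 0 := by
  by_contra h
  rcases (not_lt.1 h).lt_or_eq with hlt | h0
  · have := mink_neg_of_causal (x := -y) (by simpa [mink_neg_left, mink_neg_right] using hy)
      (by simpa using hlt) hz
    rw [mink_neg_left] at this
    linarith
  · have h1 : ‖spat y‖ ≤ y 0 := norm_spat_le hy h0.ge
    have h2 : spat y = 0 := norm_le_zero_iff.1 (h0 ▸ h1)
    rw [mink_eq_inner, h0, h2] at hyz
    simp at hyz

lemma add_mem_forwardCone {x y : Fin (n + 1) → ℝ} (hx : mink x x ≤ 0) (hx0 : 0 < x 0)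
    (hy : y ∈ ForwardCone n) : x + y ∈ ForwardCone n := by
  have := mink_neg_of_causal hx hx0 hy
  refine ⟨?_, add_pos hx0 hy.2⟩
  rw [mink_add_left, mink_add_right, mink_add_right, mink_comm y x]
  linarith [hy.1]

lemma smul_mem_forwardCone {c : ℝ} (hc : 0 < c) {x : Fin (n + 1) → ℝ}
    (hx : x ∈ ForwardCone n) : c • x ∈ ForwardCone n := by
  refine ⟨?_, mul_pos hc hx.2⟩
  rw [mink_smul_left, mink_smul_right]
  nlinarith [hx.1, mul_pos hc hc]

lemma convex_forwardCone : Convex ℝ (ForwardCone n) := by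
  intro x hx y hy a b ha hb hab
  rcases ha.eq_or_lt with rfl | ha
  · obtain rfl : b = 1 := by linarith
    simpa using hy
  rcases hb.eq_or_lt with rfl | hb
  · obtain rfl : a = 1 := by linarith
    simpa using hx
  have hax := smul_mem_forwardCone ha hx
  exact add_mem_forwardCone hax.1.le hax.2 (smul_mem_forwardCone hb hy)

/-- The orthogonal complement of a timelike vector is positive definite. -/
lemma mink_self_pos_of_orthogonal {x z : Fin (n + 1) → ℝ} (hz : z ∈ ForwardCone n)
    (h : mink x z = 0) (hx : x ≠ 0) : 0 < mink x x := by
  by_contra hle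
  have hle := not_lt.1 hle
  rcases lt_trichotomy (x 0) 0 with h0 | h0 | h0
  · have := mink_neg_of_causal (x := -x) (by simpa [mink_neg_left, mink_neg_right] using hle)
      (by simpa using h0) hz
    rw [mink_neg_left, h] at this
    simp at this
  · have h1 : ‖spat x‖ ≤ x 0 := norm_spat_le hle h0.ge
    have h2 : spat x = 0 := norm_le_zero_iff.1 (h0 ▸ h1)
    refine hx (funext fun i => ?_)
    refine Fin.cases h0 (fun i => ?_) i
    exact congrArg (fun v : EuclideanSpace ℝ (Fin n) => v i) h2
  · have := mink_neg_of_causal hle h0 hz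
    linarith

lemma mink_lift (e : Fin (n + 1) → ℝ) (y : EuclideanSpace ℝ (Fin n)) :
    mink e (lift y) = -e 0 + inner ℝ (spat e) y := by
  rw [mink_eq_inner]
  simp [lift, spat]

@[simp] lemma kleinMap_lift (y : EuclideanSpace ℝ (Fin n)) : kleinMap (lift y) = y := by
  ext i; simp [kleinMap, lift]

@[simp] lemma lift_zero (y : EuclideanSpace ℝ (Fin n)) : lift y 0 = 1 := rfl

@[simp] lemma spat_lift (y : EuclideanSpace ℝ (Fin n)) : spat (lift y) = y := by
  ext i; simp [spat, lift]

lemma mink_lift_self (y : EuclideanSpace ℝ (Fin n)) : mink (lift y) (lift y) = ‖y‖ ^ 2 - 1 := by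
  rw [mink_eq_inner, spat_lift, real_inner_self_eq_norm_sq]; simp; ring

lemma smul_lift_kleinMap {x : Fin (n + 1) → ℝ} (hx : x 0 ≠ 0) :
    x 0 • lift (kleinMap x) = x := by
  funext i
  refine Fin.cases ?_ (fun i => ?_) i
  · simp [lift]
  · simp [lift, kleinMap]; field_simp

lemma mink_lift_kleinMap (e : Fin (n + 1) → ℝ) {x : Fin (n + 1) → ℝ} (hx : x 0 ≠ 0) :
    mink e x = x 0 * mink e (lift (kleinMap x)) := by
  rw [← mink_smul_right, smul_lift_kleinMap hx]

/-- The orthogonal complement of a null vector is positive semidefinite with radical spanned by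
that vector. -/
lemma mink_self_nonneg_of_orthogonal_null {x : Fin (n + 1) → ℝ} {v : EuclideanSpace ℝ (Fin n)}
    (hv : ‖v‖ = 1) (h : mink x (lift v) = 0) :
    0 ≤ mink x x ∧ (mink x x ≤ 0 → x = x 0 • lift v) := by
  rw [mink_lift] at h
  have hvv : inner ℝ v v = (1 : ℝ) := by rw [real_inner_self_eq_norm_sq, hv]; norm_num
  have key : mink x x = ‖spat x - x 0 • v‖ ^ 2 := by
    rw [mink_eq_inner, ← real_inner_self_eq_norm_sq, inner_sub_left, inner_sub_right,
      inner_sub_right, inner_smul_left, inner_smul_right, inner_smul_left, inner_smul_right, hvv,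
      real_inner_comm (spat x) v, show inner ℝ (spat x) v = x 0 by linarith]
    simp only [real_inner_self_eq_norm_sq, conj_trivial]
    ring
  refine ⟨key ▸ sq_nonneg _, fun hle => ?_⟩
  have h0 : ‖spat x - x 0 • v‖ = 0 := by
    rw [key] at hle
    exact pow_eq_zero_iff two_ne_zero |>.1 (le_antisymm hle (sq_nonneg _))
  have h1 : spat x = x 0 • v := sub_eq_zero.1 (norm_eq_zero.1 h0)
  funext i
  refine Fin.cases ?_ (fun i => ?_) i
  · simp [lift]
  · simpa [spat, lift] using congrArg (fun v : EuclideanSpace ℝ (Fin n) => v i) h1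

end Minkowski

section HalfSpaces

/-- A convex set cut by finitely many half-spaces with a common strict point admits an irredundant
subsystem of these half-spaces, each wall of which carries a point strict for the others. -/
lemma exists_irredundant {V ι : Type*} [AddCommGroup V] [Module ℝ V] {C : Set V}
    (hC : Convex ℝ C) (f : ι → V →ₗ[ℝ] ℝ) (S : Finset ι) {z : V} (hz : z ∈ C)
    (hfz : ∀ l ∈ S, f l z < 0) :
    ∃ S' ⊆ S, (∀ x ∈ C, (∀ l ∈ S', f l x ≤ 0) → ∀ l ∈ S, f l x ≤ 0) ∧
      ∀ k ∈ S', ∃ w ∈ C, f k w = 0 ∧ ∀ l ∈ S', l ≠ k → f l w < 0 := by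
  classical
  obtain ⟨S', hS', hmin⟩ := Finset.exists_min_image
    (S.powerset.filter fun S' => ∀ x ∈ C, (∀ l ∈ S', f l x ≤ 0) → ∀ l ∈ S, f l x ≤ 0)
    Finset.card ⟨S, by simp⟩
  simp only [Finset.mem_filter, Finset.mem_powerset] at hS' hmin
  refine ⟨S', hS'.1, hS'.2, fun k hk => ?_⟩
  obtain ⟨y, hyC, hy, hky⟩ : ∃ y ∈ C, (∀ l ∈ S'.erase k, f l y ≤ 0) ∧ 0 < f k y := by
    by_contra! hcon
    have := hmin (S'.erase k) ⟨(Finset.erase_subset _ _).trans hS'.1, fun x hx hl =>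
      hS'.2 x hx fun l hlS => ?_⟩
    · exact absurd (Finset.card_erase_lt_of_mem hk) (not_lt.2 this)
    · rcases eq_or_ne l k with rfl | hne
      · exact hcon x hx hl
      · exact hl l (Finset.mem_erase.2 ⟨hne, hlS⟩)
  have hkz := hfz k (hS'.1 hk)
  have hd : 0 < f k y - f k z := by linarith
  refine ⟨(f k y / (f k y - f k z)) • z + (-f k z / (f k y - f k z)) • y,
    hC hz hyC (by positivity) (div_nonneg (by linarith) hd.le) (by field_simp; ring), ?_, ?_⟩
  · simp only [map_add, map_smul, smul_eq_mul]; field_simp; ring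
  · intro l hl hne
    have h1 := hfz l (hS'.1 hl)
    have h2 := hy l (Finset.mem_erase.2 ⟨hne, hl⟩)
    simp only [map_add, map_smul, smul_eq_mul]
    have h3 : 0 < f k y / (f k y - f k z) := by positivity
    have h4 : 0 ≤ -f k z / (f k y - f k z) := div_nonneg (by linarith) hd.le
    nlinarith

end HalfSpaces

namespace HypPolyhedron

section Structure

variable {n : ℕ} {P : HypPolyhedron n}

/-- The linear functional cutting out the `k`-th half-space. -/
abbrev wall (P : HypPolyhedron n) (k : Fin P.m) : (Fin (n + 1) → ℝ) →ₗ[ℝ] ℝ := minkForm (P.e k)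

lemma exists_strict (P : HypPolyhedron n) :
    ∃ z ∈ ForwardCone n, ∀ k, mink (P.e k) z < 0 := by
  obtain ⟨y, hy⟩ := P.nonempty_int
  have key : ∀ y' ∈ kleinMap '' {x ∈ Hyperboloid n | ∀ i, mink (P.e i) x ≤ 0},
      lift y' ∈ ForwardCone n ∧ ∀ k, mink (P.e k) (lift y') ≤ 0 := by
    rintro _ ⟨x, ⟨⟨hx, hx0⟩, hxk⟩, rfl⟩
    refine ⟨⟨?_, by simp⟩, fun k => ?_⟩
    · have := smul_lift_kleinMap hx0.ne'
      rw [← this, mink_smul_left, mink_smul_right] at hx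
      by_contra! hcon
      nlinarith [mul_nonneg (mul_pos hx0 hx0).le hcon]
    · have := mink_lift_kleinMap (P.e k) hx0.ne'
      by_contra! hcon
      nlinarith [hxk k]
  refine ⟨lift y, (key y (interior_subset hy)).1, fun k => ?_⟩
  have hnorm : 0 < ‖spat (P.e k)‖ ^ 2 := by
    have := P.unit k
    rw [mink_eq_inner, real_inner_self_eq_norm_sq] at this
    nlinarith [mul_self_nonneg (P.e k 0)]
  have hcont : Filter.Tendsto (fun t : ℝ => y + t • spat (P.e k)) (nhdsWithin 0 (Set.Ioi 0))
      (nhds y) := by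
    have : Continuous fun t : ℝ => y + t • spat (P.e k) := by fun_prop
    simpa using (this.tendsto 0).mono_left nhdsWithin_le_nhds
  obtain ⟨t, ht, ht0⟩ := ((hcont.eventually (mem_interior_iff_mem_nhds.1 hy)).and
    self_mem_nhdsWithin).exists
  have h1 := (key _ ht).2 k
  have ht0 : 0 < t := ht0
  rw [mink_lift, inner_add_right, inner_smul_right, real_inner_self_eq_norm_sq] at h1
  rw [mink_lift]
  nlinarith [mul_pos ht0 hnorm]

/-- An irredundant set of half-spaces cutting out the polyhedron. -/
structure IsFacetSystem (P : HypPolyhedron n) (S : Finset (Fin P.m)) : Prop where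
  cut : ∀ x ∈ ForwardCone n, (∀ k ∈ S, mink (P.e k) x ≤ 0) → ∀ k, mink (P.e k) x ≤ 0
  facet : ∀ k ∈ S, ∃ w ∈ ForwardCone n, mink (P.e k) w = 0 ∧
    ∀ l ∈ S, l ≠ k → mink (P.e l) w < 0

lemma exists_isFacetSystem (P : HypPolyhedron n) : ∃ S, P.IsFacetSystem S := by
  obtain ⟨z, hz, hkz⟩ := P.exists_strict
  obtain ⟨S, -, h1, h2⟩ := exists_irredundant convex_forwardCone P.wall Finset.univ hz
    fun l _ => hkz l
  exact ⟨S, fun x hx h k => h1 x hx h k (Finset.mem_univ k), h2⟩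

lemma kleinMap_mem_image_of_mem_forwardCone {x : Fin (n + 1) → ℝ} (hx : x ∈ ForwardCone n)
    (hk : ∀ k, mink (P.e k) x ≤ 0) : kleinMap x ∈ kleinMap '' P.carrier := by
  have hs : 0 < Real.sqrt (-mink x x) := Real.sqrt_pos.2 (by linarith [hx.1])
  have hsq : Real.sqrt (-mink x x) ^ 2 = -mink x x := Real.sq_sqrt (by linarith [hx.1])
  refine ⟨(Real.sqrt (-mink x x))⁻¹ • x, ⟨⟨?_, ?_⟩, fun k => ?_⟩, ?_⟩
  · rw [mink_smul_left, mink_smul_right]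
    field_simp
    linarith
  · exact mul_pos (inv_pos.2 hs) hx.2
  · rw [mink_smul_right]
    exact mul_nonpos_of_nonneg_of_nonpos (inv_pos.2 hs).le (hk k)
  · ext i
    have := hx.2.ne'
    simp only [kleinMap, Pi.smul_apply, smul_eq_mul]
    field_simp

lemma kleinMap_mem_cl {S : Finset (Fin P.m)} (hS : P.IsFacetSystem S) {x : Fin (n + 1) → ℝ}
    (hx : mink x x ≤ 0) (hx0 : 0 < x 0) (hk : ∀ k ∈ S, mink (P.e k) x ≤ 0) :
    kleinMap x ∈ P.cl := by
  obtain ⟨z, hz, hkz⟩ := P.exists_strict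
  have hcont : ContinuousAt (fun t : ℝ => kleinMap (x + t • z)) 0 := by
    have h0 : (x + (0 : ℝ) • z) 0 ≠ 0 := by simpa using hx0.ne'
    unfold kleinMap
    refine (PiLp.continuous_toLp 2 _).continuousAt.comp (continuousAt_pi.2 fun i => ?_)
    exact ContinuousAt.div (by fun_prop) (by fun_prop) h0
  have hlim : Filter.Tendsto (fun t : ℝ => kleinMap (x + t • z)) (nhdsWithin 0 (Set.Ioi 0))
      (nhds (kleinMap x)) := by
    simpa [ContinuousAt] using hcont.tendsto.mono_left nhdsWithin_le_nhds
  refine mem_closure_of_tendsto hlim ?_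
  filter_upwards [self_mem_nhdsWithin] with t ht
  have ht : 0 < t := ht
  have hmem := add_mem_forwardCone hx hx0 (smul_mem_forwardCone ht hz)
  refine kleinMap_mem_image_of_mem_forwardCone hmem (hS.cut _ hmem fun k hkS => ?_)
  rw [mink_add_right, mink_smul_right]
  nlinarith [hk k hkS, hkz k]

lemma continuous_lift : Continuous (lift : EuclideanSpace ℝ (Fin n) → Fin (n + 1) → ℝ) := by
  refine continuous_pi fun i => ?_
  refine Fin.cases ?_ (fun i => ?_) i
  · simpa [lift] using continuous_const
  · simp only [lift, Fin.cons_succ]; fun_prop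

lemma norm_le_one_of_mem_cl {y : EuclideanSpace ℝ (Fin n)} (hy : y ∈ P.cl) : ‖y‖ ≤ 1 := by
  refine closure_minimal ?_ (isClosed_le continuous_norm continuous_const) hy
  rintro _ ⟨x, ⟨⟨hx, hx0⟩, -⟩, rfl⟩
  have h1 := mink_lift_self (kleinMap x)
  have h2 := smul_lift_kleinMap hx0.ne'
  rw [← h2, mink_smul_left, mink_smul_right, h1] at hx
  simp only [Set.mem_ofPred_eq]
  by_contra! hcon
  nlinarith [mul_pos (mul_pos hx0 hx0) (show 0 < ‖kleinMap x‖ ^ 2 - 1 by nlinarith)]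

lemma mink_lift_nonpos_of_mem_cl {y : EuclideanSpace ℝ (Fin n)} (hy : y ∈ P.cl) (k : Fin P.m) :
    mink (P.e k) (lift y) ≤ 0 := by
  refine closure_minimal ?_ (isClosed_le ((continuous_mink (P.e k)).comp continuous_lift)
    continuous_const) hy
  rintro _ ⟨x, ⟨⟨hx, hx0⟩, hk⟩, rfl⟩
  have := mink_lift_kleinMap (P.e k) hx0.ne'
  simp only [Set.mem_ofPred_eq, Function.comp_apply]
  by_contra! hcon
  nlinarith [hk k]

lemma mem_idealVerts_iff {y : EuclideanSpace ℝ (Fin n)} :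
    y ∈ P.idealVerts ↔ y ∈ P.cl ∧ ‖y‖ = 1 := by
  constructor
  · rintro ⟨h, hn⟩
    exact ⟨h.subset rfl, hn⟩
  · rintro ⟨h, hn⟩
    refine ⟨fun _ => ⟨innerSL ℝ y, ?_⟩, hn⟩
    have hyy : inner ℝ y y = (1 : ℝ) := by rw [real_inner_self_eq_norm_sq, hn]; norm_num
    ext x
    simp only [Set.mem_singleton_iff, innerSL_apply_apply, Set.mem_ofPred_eq]
    constructor
    · rintro rfl
      refine ⟨h, fun w hw => ?_⟩
      have h1 := real_inner_le_norm x w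
      have h2 := norm_le_one_of_mem_cl hw
      rw [hn] at h1
      linarith
    · rintro ⟨hx, hmax⟩
      have h1 := hmax y h
      have h2 := norm_le_one_of_mem_cl hx
      rw [hyy] at h1
      have h3 : ‖y - x‖ ^ 2 ≤ 0 := by
        rw [norm_sub_sq_real, hn]
        nlinarith [norm_nonneg x]
      have h4 : ‖y - x‖ = 0 := pow_eq_zero_iff two_ne_zero |>.1 (le_antisymm h3 (sq_nonneg _))
      exact (sub_eq_zero.1 (norm_eq_zero.1 h4)).symm

lemma kleinMap_mem_idealVerts {S : Finset (Fin P.m)} (hS : P.IsFacetSystem S)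
    {x : Fin (n + 1) → ℝ} (hx : mink x x = 0) (hx0 : 0 < x 0)
    (hk : ∀ k ∈ S, mink (P.e k) x ≤ 0) : kleinMap x ∈ P.idealVerts := by
  refine mem_idealVerts_iff.2 ⟨kleinMap_mem_cl hS hx.le hx0 hk, ?_⟩
  have h1 := mink_lift_self (kleinMap x)
  have h2 := smul_lift_kleinMap hx0.ne'
  rw [← h2, mink_smul_left, mink_smul_right, h1] at hx
  have h3 : ‖kleinMap x‖ ^ 2 = 1 := by
    have : ‖kleinMap x‖ ^ 2 - 1 = 0 := by
      rcases mul_eq_zero.1 hx with h | h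
      · exact absurd h hx0.ne'
      · exact (mul_eq_zero.1 h).resolve_left hx0.ne'
    linarith
  exact (pow_eq_one_iff_of_nonneg (norm_nonneg _) two_ne_zero).1 h3

/-- A set contained in a translate of a subspace `D` and containing a neighbourhood of one of its
points in that translate has vector span `D`. -/
lemma _root_.vectorSpan_eq_of_nhds {E : Type*} [NormedAddCommGroup E] [NormedSpace ℝ E]
    (D : Submodule ℝ E) {F : Set E} {y : E} (h1 : ∀ x ∈ F, x - y ∈ D)
    (h2 : ∀ᶠ x in nhds y, x - y ∈ D → x ∈ F) : vectorSpan ℝ F = D := by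
  have hy : y ∈ F := h2.self_of_nhds (by simp)
  apply le_antisymm
  · rw [vectorSpan_eq_span_vsub_set_right ℝ hy, Submodule.span_le]
    rintro _ ⟨x, hx, rfl⟩
    exact h1 x hx
  · intro v hv
    have hcont : Filter.Tendsto (fun t : ℝ => y + t • v) (nhdsWithin 0 (Set.Ioi 0)) (nhds y) := by
      have : Continuous fun t : ℝ => y + t • v := by fun_prop
      simpa using (this.tendsto 0).mono_left nhdsWithin_le_nhds
    obtain ⟨t, ht, ht0⟩ := ((hcont.eventually h2).and self_mem_nhdsWithin).exists
    have ht0 : 0 < t := ht0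
    have hm : y + t • v ∈ F := ht (by simpa using D.smul_mem t hv)
    have := vsub_mem_vectorSpan ℝ hm hy
    simp only [vsub_eq_sub, add_sub_cancel_left] at this
    simpa [smul_smul, ht0.ne'] using (vectorSpan ℝ F).smul_mem t⁻¹ this

/-- The part of the closed polyhedron on which the walls of `A` vanish. -/
def wallSection (P : HypPolyhedron n) (A : Finset (Fin P.m)) : Set (EuclideanSpace ℝ (Fin n)) :=
  {y ∈ P.cl | ∀ k ∈ A, mink (P.e k) (lift y) = 0}

lemma isExposed_wallSection (A : Finset (Fin P.m)) : IsExposed ℝ P.cl (P.wallSection A) := by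
  rintro ⟨y₀, hy₀, hA₀⟩
  refine ⟨innerSL ℝ (∑ k ∈ A, spat (P.e k)), ?_⟩
  have hsum : ∀ y, inner ℝ (∑ k ∈ A, spat (P.e k)) y =
      ∑ k ∈ A, mink (P.e k) (lift y) + ∑ k ∈ A, P.e k 0 := fun y => by
    rw [sum_inner, ← Finset.sum_add_distrib]
    exact Finset.sum_congr rfl fun k _ => by rw [mink_lift]; ring
  ext y
  simp only [wallSection, Set.mem_ofPred_eq, innerSL_apply_apply, hsum, add_le_add_iff_right]
  refine and_congr_right fun hy => ⟨fun h w hw => ?_, fun h k hk => ?_⟩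
  · rw [Finset.sum_eq_zero h]
    exact Finset.sum_nonpos fun k _ => mink_lift_nonpos_of_mem_cl hw k
  · have h1 := h y₀ hy₀
    rw [Finset.sum_eq_zero hA₀] at h1
    exact (Finset.sum_eq_zero_iff_of_nonpos
      fun k _ => mink_lift_nonpos_of_mem_cl hy k).1
      (le_antisymm (Finset.sum_nonpos fun k _ => mink_lift_nonpos_of_mem_cl hy k) h1) k hk

lemma vectorSpan_wallSection {S : Finset (Fin P.m)} (hS : P.IsFacetSystem S) (A : Finset (Fin P.m))
    {w : Fin (n + 1) → ℝ} (hw : w ∈ ForwardCone n) (hAw : ∀ k ∈ A, mink (P.e k) w = 0)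
    (hnear : ∀ᶠ x in nhds w, (∀ k ∈ A, mink (P.e k) x = 0) → ∀ l ∈ S, mink (P.e l) x ≤ 0) :
    kleinMap w ∈ P.wallSection A ∧
      vectorSpan ℝ (P.wallSection A) =
        (Submodule.span ℝ ((fun k => spat (P.e k)) '' (A : Set (Fin P.m))))ᗮ := by
  have hw0 := hw.2.ne'
  have hAl : ∀ k ∈ A, mink (P.e k) (lift (kleinMap w)) = 0 := fun k hk => by
    have := mink_lift_kleinMap (P.e k) hw0
    rw [hAw k hk] at this
    exact (mul_eq_zero.1 this.symm).resolve_left hw0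
  have hdiff : ∀ (y : EuclideanSpace ℝ (Fin n)) k, mink (P.e k) (lift y) =
      mink (P.e k) (lift (kleinMap w)) + inner ℝ (spat (P.e k)) (y - kleinMap w) := fun y k => by
    rw [mink_lift, mink_lift, inner_sub_right]; ring
  have hD : ∀ v, v ∈ (Submodule.span ℝ ((fun k => spat (P.e k)) '' (A : Set (Fin P.m))))ᗮ ↔
      ∀ k ∈ A, inner ℝ (spat (P.e k)) v = 0 := fun v => by
    rw [Submodule.mem_orthogonal]
    refine ⟨fun h k hk => h _ (Submodule.subset_span ⟨k, hk, rfl⟩), fun h u hu => ?_⟩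
    induction hu using Submodule.span_induction with
    | mem x hx => obtain ⟨k, hk, rfl⟩ := hx; exact h k hk
    | zero => simp
    | add x y _ _ hx hy => rw [inner_add_left, hx, hy, add_zero]
    | smul c x _ hx => rw [inner_smul_left, hx, mul_zero]
  have hmem : kleinMap w ∈ P.wallSection A :=
    ⟨kleinMap_mem_cl hS hw.1.le hw.2 (hnear.self_of_nhds hAw), hAl⟩
  refine ⟨hmem, vectorSpan_eq_of_nhds _ (y := kleinMap w) (fun x hx => ?_) ?_⟩
  · rw [hD]
    intro k hk
    have := hdiff x k
    rw [hx.2 k hk, hAl k hk] at this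
    linarith
  · have hlim : Filter.Tendsto (fun y => w 0 • lift y) (nhds (kleinMap w)) (nhds w) := by
      have : Continuous fun y : EuclideanSpace ℝ (Fin n) => w 0 • lift y :=
        continuous_pi fun i => continuous_const.mul ((continuous_apply i).comp continuous_lift)
      simpa [smul_lift_kleinMap hw0] using this.tendsto (kleinMap w)
    filter_upwards [hlim.eventually hnear, hlim.eventually (isOpen_forwardCone.mem_nhds hw)]
      with y hy hyF hyD
    rw [hD] at hyD
    have hA : ∀ k ∈ A, mink (P.e k) (lift y) = 0 := fun k hk => by
      rw [hdiff, hAl k hk, hyD k hk, add_zero]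
    refine ⟨?_, hA⟩
    have hyk := hy fun k hk => by rw [mink_smul_right, hA k hk, mul_zero]
    have : kleinMap (w 0 • lift y) = y := by
      ext i
      simp [kleinMap, lift, hw0]
    rw [← this]
    exact kleinMap_mem_cl hS hyF.1.le hyF.2 hyk

end Structure

section RightAngled

variable {n : ℕ} {P : HypPolyhedron n} {S : Finset (Fin P.m)}

lemma spat_ne_zero (k : Fin P.m) : spat (P.e k) ≠ 0 := fun h => by
  have := P.unit k
  rw [mink_eq_inner, h, inner_zero_left] at this
  nlinarith [mul_self_nonneg (P.e k 0)]

lemma IsFacetSystem.wallSection_mem_faces (hS : P.IsFacetSystem S) {k : Fin P.m} (hk : k ∈ S) :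
    P.wallSection {k} ∈ P.faces (n - 1) := by
  obtain ⟨w, hw, hkw, hlw⟩ := hS.facet k hk
  have hnear : ∀ᶠ x in nhds w, (∀ i ∈ ({k} : Finset (Fin P.m)), mink (P.e i) x = 0) →
      ∀ l ∈ S, mink (P.e l) x ≤ 0 := by
    have : ∀ᶠ x in nhds w, ∀ l ∈ S, l ≠ k → mink (P.e l) x < 0 := by
      rw [Filter.eventually_all_finset]
      intro l hl
      by_cases hne : l = k
      · simp [hne]
      · filter_upwards [(continuous_mink (P.e l)).continuousAt.eventually_lt continuousAt_const
          (hlw l hl hne)] with x hx _ using hx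
    filter_upwards [this] with x hx hkx l hl
    by_cases hne : l = k
    · exact hne ▸ (hkx k (by simp)).le
    · exact (hx l hl hne).le
  obtain ⟨hmem, hspan⟩ := vectorSpan_wallSection hS {k} hw (by simpa using hkw) hnear
  refine ⟨isExposed_wallSection _, ⟨_, hmem⟩, ?_⟩
  have h1 := Submodule.finrank_add_finrank_orthogonal (Submodule.span ℝ {spat (P.e k)})
  rw [finrank_span_singleton (spat_ne_zero k), finrank_euclideanSpace_fin] at h1
  rw [sdim, hspan, Finset.coe_singleton, Set.image_singleton]
  omega

lemma FiniteVolume.finite_faces (h : P.FiniteVolume) (k : ℕ) : (P.faces k).Finite := by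
  have hcl : IsCompact P.cl := by
    rw [h.2]
    exact h.1.isCompact_convexHull ℝ
  have hconv : Convex ℝ P.cl := h.2 ▸ convex_convexHull ℝ _
  refine Set.Finite.of_finite_image (f := fun F => F.extremePoints ℝ)
    (h.1.finite_subsets.subset ?_) ?_
  · rintro _ ⟨F, hF, rfl⟩
    refine (hF.1.isExtreme.extremePoints_subset_extremePoints).trans ?_
    rw [h.2]
    exact extremePoints_convexHull_subset
  · intro F hF G hG hFG
    have hFG : F.extremePoints ℝ = G.extremePoints ℝ := hFG
    rw [← closure_convexHull_extremePoints (hF.1.isCompact hcl) (hF.1.convex hconv),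
      ← closure_convexHull_extremePoints (hG.1.isCompact hcl) (hG.1.convex hconv), hFG]

lemma IsFacetSystem.card_le_a (hS : P.IsFacetSystem S) (h : P.FiniteVolume) :
    S.card ≤ P.a (n - 1) := by
  classical
  rw [a, ← Set.ncard_coe_finset S]
  refine Set.ncard_le_ncard_of_injOn (fun k => P.wallSection {k})
    (fun k hk => hS.wallSection_mem_faces hk) ?_ (h.finite_faces _)
  intro k hk l hl hkl
  by_contra hne
  obtain ⟨w, hw, hkw, hlw⟩ := hS.facet k hk
  have hw0 := hw.2.ne'
  have hmem : kleinMap w ∈ P.wallSection {k} := by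
    refine ⟨kleinMap_mem_cl hS hw.1.le hw.2 fun j hj => ?_, fun j hj => ?_⟩
    · by_cases hjk : j = k
      · exact hjk ▸ hkw.le
      · exact (hlw j hj hjk).le
    · obtain rfl := Finset.mem_singleton.1 hj
      have := mink_lift_kleinMap (P.e j) hw0
      rw [hkw] at this
      exact (mul_eq_zero.1 this.symm).resolve_left hw0
  have hkl : P.wallSection {k} = P.wallSection {l} := hkl
  rw [hkl] at hmem
  have h1 := hmem.2 l (by simp)
  have h2 := mink_lift_kleinMap (P.e l) hw0
  rw [h1, mul_zero] at h2
  exact (hlw l hl (Ne.symm hne)).ne h2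

/-- Two walls sharing a face of codimension two of a right-angled polyhedron are orthogonal. -/
lemma IsFacetSystem.orthogonal_of_near (hS : P.IsFacetSystem S) (hra : P.IsRightAngled)
    {i j : Fin P.m} (hi : i ∈ S) (hj : j ∈ S) (hij : i ≠ j) {w : Fin (n + 1) → ℝ}
    (hw : w ∈ ForwardCone n) (hiw : mink (P.e i) w = 0) (hjw : mink (P.e j) w = 0)
    (hnear : ∀ᶠ x in nhds w, mink (P.e i) x = 0 → mink (P.e j) x = 0 →
      ∀ l ∈ S, mink (P.e l) x ≤ 0) : mink (P.e i) (P.e j) = 0 := by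
  classical
  obtain ⟨hmem, hspan⟩ := vectorSpan_wallSection hS {i, j} hw (by simp [hiw, hjw]) (by
    filter_upwards [hnear] with x hx h
    exact hx (h i (by simp)) (h j (by simp)))
  refine hra i j hij ⟨P.wallSection {i, j}, ⟨isExposed_wallSection _, ⟨_, hmem⟩, ?_⟩, ?_, ?_⟩
  · have hli : LinearIndependent ℝ ![spat (P.e i), spat (P.e j)] := by
      rw [LinearIndependent.pair_iff]
      intro s t hst
      have hw' : ∀ c : Fin (n + 1) → ℝ, mink (s • P.e i + t • P.e j) c =
          -((s * P.e i 0 + t * P.e j 0) * c 0) := fun c => by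
        have : spat (s • P.e i + t • P.e j) = s • spat (P.e i) + t • spat (P.e j) := by
          ext; simp [spat]
        rw [mink_eq_inner, this, hst]
        simp
      have h0 : s * P.e i 0 + t * P.e j 0 = 0 := by
        have := hw' w
        rw [mink_add_left, mink_smul_left, mink_smul_left, hiw, hjw] at this
        simpa [hw.2.ne'] using this
      have hz : ∀ c, s * mink (P.e i) c + t * mink (P.e j) c = 0 := fun c => by
        have := hw' c
        rw [mink_add_left, mink_smul_left, mink_smul_left, h0] at this
        simpa using this
      obtain ⟨wi, -, hii, hiw⟩ := hS.facet i hi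
      obtain ⟨wj, -, hjj, hjw⟩ := hS.facet j hj
      have h1 := hz wi
      have h2 := hz wj
      rw [hii, mul_zero, zero_add] at h1
      rw [hjj, mul_zero, add_zero] at h2
      exact ⟨(mul_eq_zero.1 h2).resolve_right (hjw i hi hij).ne,
        (mul_eq_zero.1 h1).resolve_right (hiw j hj hij.symm).ne⟩
    have h1 := Submodule.finrank_add_finrank_orthogonal
      (Submodule.span ℝ {spat (P.e i), spat (P.e j)})
    have h2 := finrank_span_eq_card hli
    rw [Matrix.range_cons, Matrix.range_cons, Matrix.range_empty, Set.union_empty,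
      Set.singleton_union, Fintype.card_fin] at h2
    rw [h2, finrank_euclideanSpace_fin] at h1
    rw [sdim, hspan, Finset.coe_pair, Set.image_pair]
    omega
  all_goals
    intro x hx hxF
    rw [mink_lift_kleinMap _ hx.1.2.ne', hxF.2 _ (by simp), mul_zero]

/-- The orthogonal projection to the hyperplane normal to a unit vector. -/
def proj (e x : Fin (n + 1) → ℝ) : Fin (n + 1) → ℝ := x - mink e x • e

lemma proj_mem_forwardCone {e x : Fin (n + 1) → ℝ} (he : mink e e = 1) (hx : x ∈ ForwardCone n) :
    proj e x ∈ ForwardCone n := by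
  have h1 : mink (proj e x) x = mink x x - mink e x ^ 2 := by
    rw [proj, mink_sub_left, mink_smul_left]; ring
  have h2 : mink (proj e x) (proj e x) = mink x x - mink e x ^ 2 := by
    rw [proj, mink_sub_left, mink_sub_right, mink_sub_right, mink_smul_left, mink_smul_right,
      mink_smul_left, mink_smul_right, he, mink_comm x e]
    ring
  have h3 := hx.1
  exact mem_forwardCone_of_mink_neg hx (by nlinarith [sq_nonneg (mink e x)])
    (by nlinarith [sq_nonneg (mink e x)])

/-- The orthogonal projection to a wall of a right-angled polyhedron maps the polyhedron to
itself. -/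
lemma IsFacetSystem.proj_mem (hS : P.IsFacetSystem S) (hra : P.IsRightAngled) {i : Fin P.m}
    (hi : i ∈ S) {x : Fin (n + 1) → ℝ} (hx : x ∈ ForwardCone n)
    (hxS : ∀ l ∈ S, mink (P.e l) x ≤ 0) : ∀ l ∈ S, mink (P.e l) (proj (P.e i) x) ≤ 0 := by
  classical
  obtain ⟨wi, hwi, hii, hiw⟩ := hS.facet i hi
  have hconv : Convex ℝ (ForwardCone n ∩ {x | mink (P.e i) x = 0}) :=
    convex_forwardCone.inter (convex_hyperplane (minkForm (P.e i)).isLinear 0)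
  obtain ⟨S', hS'S, hcut, hfac⟩ := exists_irredundant hconv P.wall (S.erase i) ⟨hwi, hii⟩
    fun l hl => hiw l (Finset.mem_of_mem_erase hl) (Finset.ne_of_mem_erase hl)
  have hfull : ∀ y ∈ ForwardCone n, mink (P.e i) y = 0 → (∀ l ∈ S', mink (P.e l) y ≤ 0) →
      ∀ l ∈ S, mink (P.e l) y ≤ 0 := fun y hy hiy hy' l hl => by
    by_cases hli : l = i
    · exact hli ▸ hiy.le
    · exact hcut y ⟨hy, hiy⟩ hy' l (Finset.mem_erase.2 ⟨hli, hl⟩)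
  have horth : ∀ k ∈ S', mink (P.e i) (P.e k) = 0 := fun k hk => by
    obtain ⟨w, ⟨hwF, hiw'⟩, hkw, hlw⟩ := hfac k hk
    have hkS := hS'S hk
    refine hS.orthogonal_of_near hra hi (Finset.mem_of_mem_erase hkS)
      (Finset.ne_of_mem_erase hkS).symm hwF hiw' hkw ?_
    have hev : ∀ᶠ x in nhds w, ∀ l ∈ S', l ≠ k → mink (P.e l) x < 0 := by
      rw [Filter.eventually_all_finset]
      intro l hl
      by_cases hne : l = k
      · simp [hne]
      · filter_upwards [(continuous_mink (P.e l)).continuousAt.eventually_lt continuousAt_const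
          (hlw l hl hne)] with x hx _ using hx
    filter_upwards [hev, isOpen_forwardCone.mem_nhds hwF] with y hy hyF hiy hky
    refine hfull y hyF hiy fun l hl => ?_
    by_cases hne : l = k
    · exact hne ▸ hky.le
    · exact (hy l hl hne).le
  refine hfull _ (proj_mem_forwardCone (P.unit i) hx) ?_ fun k hk => ?_
  · rw [proj, mink_sub_right, mink_smul_right, P.unit i]; ring
  · rw [proj, mink_sub_right, mink_smul_right, mink_comm (P.e k) (P.e i), horth k hk]
    linarith [hxS k (Finset.mem_of_mem_erase (hS'S hk))]

lemma IsFacetSystem.mink_nonpos (hS : P.IsFacetSystem S) (hra : P.IsRightAngled)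
    {i j : Fin P.m} (hi : i ∈ S) (hj : j ∈ S) (hij : i ≠ j) : mink (P.e i) (P.e j) ≤ 0 := by
  obtain ⟨w, hw, hjj, hjw⟩ := hS.facet j hj
  have h1 := hS.proj_mem hra hi hw (fun l hl => by
    by_cases hlj : l = j
    · exact hlj ▸ hjj.le
    · exact (hjw l hl hlj).le) j hj
  rw [proj, mink_sub_right, mink_smul_right, hjj, mink_comm (P.e j)] at h1
  have h2 := hjw i hi hij
  by_contra! hcon
  nlinarith

/-- If the span of two wall normals is positive definite, then the projection to its orthogonal
complement maps a right-angled polyhedron to itself. -/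
lemma IsFacetSystem.proj_pair_mem (hS : P.IsFacetSystem S) (hra : P.IsRightAngled)
    {i j : Fin P.m} (hi : i ∈ S) (hj : j ∈ S) (hlt : |mink (P.e i) (P.e j)| < 1)
    {x : Fin (n + 1) → ℝ} (hx : x ∈ ForwardCone n) (hxS : ∀ l ∈ S, mink (P.e l) x ≤ 0)
    {y : Fin (n + 1) → ℝ} {α β : ℝ} (hy : x = y + α • P.e i + β • P.e j)
    (hiy : mink (P.e i) y = 0) (hjy : mink (P.e j) y = 0) :
    ∀ l ∈ S, mink (P.e l) y ≤ 0 := by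
  set g := mink (P.e i) (P.e j) with hg
  have hgj : mink (P.e j) (P.e i) = g := mink_comm _ _
  set u := P.e j - g • P.e i with hu
  have hiter : ∀ N : ℕ, y + (β * (g ^ 2) ^ N) • u ∈ ForwardCone n ∧
      ∀ l ∈ S, mink (P.e l) (y + (β * (g ^ 2) ^ N) • u) ≤ 0 := by
    intro N
    induction N with
    | zero =>
      have : y + (β * (g ^ 2) ^ 0) • u = proj (P.e i) x := by
        have hix : mink (P.e i) x = α + β * g := by
          rw [hy, mink_add_right, mink_add_right, mink_smul_right, mink_smul_right, hiy,
            P.unit i]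
          ring
        rw [proj, hix, hy, hu]
        module
      rw [this]
      exact ⟨proj_mem_forwardCone (P.unit i) hx, hS.proj_mem hra hi hx hxS⟩
    | succ N ih =>
      set c := β * (g ^ 2) ^ N with hc
      have hju : mink (P.e j) (y + c • u) = c * (1 - g ^ 2) := by
        rw [mink_add_right, mink_smul_right, hjy, hu, mink_sub_right, mink_smul_right, P.unit j,
          hgj]
        ring
      have hiu : mink (P.e i) (proj (P.e j) (y + c • u)) = -(c * (1 - g ^ 2)) * g := by
        rw [proj, hju, mink_sub_right, mink_add_right, mink_smul_right, mink_smul_right, hiy, hu,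
          mink_sub_right, mink_smul_right, P.unit i, ← hg]
        ring
      have : y + (β * (g ^ 2) ^ (N + 1)) • u =
          proj (P.e i) (proj (P.e j) (y + c • u)) := by
        rw [proj, hiu, proj, hju, pow_succ, ← mul_assoc, ← hc, hu]
        module
      rw [this]
      have h1 := proj_mem_forwardCone (P.unit j) ih.1
      exact ⟨proj_mem_forwardCone (P.unit i) h1,
        hS.proj_mem hra hi h1 (hS.proj_mem hra hj ih.1 ih.2)⟩
  intro l hl
  have hpow : Filter.Tendsto (fun N : ℕ => (g ^ 2) ^ N) Filter.atTop (nhds 0) :=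
    tendsto_pow_atTop_nhds_zero_of_lt_one (sq_nonneg g) ((sq_lt_one_iff_abs_lt_one g).2 hlt)
  have hlim : Filter.Tendsto (fun N : ℕ => mink (P.e l) y + β * (g ^ 2) ^ N * mink (P.e l) u)
      Filter.atTop (nhds (mink (P.e l) y)) := by
    simpa using ((hpow.const_mul β).mul_const (mink (P.e l) u)).const_add (mink (P.e l) y)
  refine le_of_tendsto hlim (Filter.Eventually.of_forall fun N => ?_)
  have := (hiter N).2 l hl
  rwa [mink_add_right, mink_smul_right] at this

/-- Distinct walls of a right-angled polyhedron are orthogonal, tangent or ultraparallel. -/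
lemma IsFacetSystem.mink_eq_zero_or_le (hS : P.IsFacetSystem S) (hra : P.IsRightAngled)
    {i j : Fin P.m} (hi : i ∈ S) (hj : j ∈ S) (hij : i ≠ j) :
    mink (P.e i) (P.e j) = 0 ∨ mink (P.e i) (P.e j) ≤ -1 := by
  rw [or_iff_not_imp_right, not_le]
  intro hgt
  have hle := hS.mink_nonpos hra hi hj hij
  set g := mink (P.e i) (P.e j) with hg
  have hgj : mink (P.e j) (P.e i) = g := mink_comm _ _
  have hlt : |g| < 1 := abs_lt.2 ⟨hgt, by linarith⟩
  have hg2 : 0 < 1 - g ^ 2 := by nlinarith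
  obtain ⟨z, hz, hkz⟩ := P.exists_strict
  set α := (mink (P.e i) z - g * mink (P.e j) z) / (1 - g ^ 2) with hα
  set β := (mink (P.e j) z - g * mink (P.e i) z) / (1 - g ^ 2) with hβ
  set y := z - α • P.e i - β • P.e j with hy
  have hiy : mink (P.e i) y = 0 := by
    rw [hy, mink_sub_right, mink_sub_right, mink_smul_right, mink_smul_right, P.unit i, ← hg]
    rw [hα, hβ]; field_simp; ring
  have hjy : mink (P.e j) y = 0 := by
    rw [hy, mink_sub_right, mink_sub_right, mink_smul_right, mink_smul_right, P.unit j, hgj]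
    rw [hα, hβ]; field_simp; ring
  have hzy : z = y + α • P.e i + β • P.e j := by rw [hy]; module
  have hzz : mink z z = mink y y + (α ^ 2 + 2 * g * α * β + β ^ 2) := by
    rw [hzy]
    simp only [mink_add_left, mink_add_right, mink_smul_left, mink_smul_right, P.unit, hiy, hjy,
      mink_comm y, hgj, ← hg]
    ring
  have hyz : mink y z = mink y y := by
    rw [hzy]
    simp only [mink_add_right, mink_smul_right, mink_comm y (P.e i), mink_comm y (P.e j), hiy, hjy]
    ring
  have hyy : mink y y < 0 := by
    nlinarith [hz.1, sq_nonneg (α + g * β), mul_nonneg hg2.le (sq_nonneg β)]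
  have hyF : y ∈ ForwardCone n := mem_forwardCone_of_mink_neg hz hyy (hyz ▸ hyy)
  refine hS.orthogonal_of_near hra hi hj hij hyF hiy hjy ?_
  have hlim : Filter.Tendsto (fun x => x + (α • P.e i + β • P.e j)) (nhds y) (nhds z) := by
    have : Continuous fun x : Fin (n + 1) → ℝ => x + (α • P.e i + β • P.e j) := by fun_prop
    have h := this.tendsto y
    rwa [← add_assoc, ← hzy] at h
  have hev : ∀ᶠ x in nhds z, ∀ l ∈ S, mink (P.e l) x < 0 := by
    rw [Filter.eventually_all_finset]
    exact fun l _ => (continuous_mink (P.e l)).continuousAt.eventually_lt continuousAt_const (hkz l)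
  filter_upwards [hlim.eventually hev, hlim.eventually (isOpen_forwardCone.mem_nhds hz)]
    with x hx hxF hix hjx
  exact hS.proj_pair_mem hra hi hj hlt hxF (fun l hl => (hx l hl).le) (add_assoc _ _ _).symm hix hjx

/-- Distinct walls of a right-angled polyhedron through a common point are orthogonal. -/
lemma IsFacetSystem.orthogonal_of_common_point (hS : P.IsFacetSystem S) (hra : P.IsRightAngled)
    {i j : Fin P.m} (hi : i ∈ S) (hj : j ∈ S) (hij : i ≠ j) {x : Fin (n + 1) → ℝ}
    (hx : x ∈ ForwardCone n) (hix : mink (P.e i) x = 0) (hjx : mink (P.e j) x = 0) :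
    mink (P.e i) (P.e j) = 0 := by
  refine (hS.mink_eq_zero_or_le hra hi hj hij).resolve_right fun hle => ?_
  obtain ⟨z, -, hkz⟩ := P.exists_strict
  have hne : P.e i + P.e j ≠ 0 := fun h0 => by
    have h1 : mink (P.e i + P.e j) z = 0 := by rw [h0]; simp [mink]
    rw [mink_add_left] at h1
    linarith [hkz i, hkz j]
  have h2 := mink_self_pos_of_orthogonal hx (by rw [mink_add_left, hix, hjx, add_zero]) hne
  rw [mink_add_left, mink_add_right, mink_add_right, P.unit, P.unit, mink_comm (P.e j)] at h2
  linarith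

end RightAngled

section Cusp

variable {n : ℕ} {P : HypPolyhedron n} {S : Finset (Fin P.m)} {v : EuclideanSpace ℝ (Fin n)}

lemma _root_.mink_nonpos_of_causal {x y : Fin (n + 1) → ℝ} (hx : mink x x ≤ 0) (hx0 : 0 ≤ x 0)
    (hy : mink y y ≤ 0) (hy0 : 0 ≤ y 0) : mink x y ≤ 0 := by
  have h1 := norm_spat_le hx hx0
  have h2 := norm_spat_le hy hy0
  have h3 := real_inner_le_norm (spat x) (spat y)
  have h4 := mul_le_mul h1 h2 (norm_nonneg _) hx0
  rw [mink_eq_inner]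
  linarith

lemma mink_lift_of_mem_idealVerts (hv : v ∈ P.idealVerts) : mink (lift v) (lift v) = 0 := by
  rw [mink_lift_self, hv.2]; norm_num

lemma kleinMap_ne_of_mink_ne_zero {x p : Fin (n + 1) → ℝ} (hx : x 0 ≠ 0) (h : mink p x ≠ 0)
    (hv : mink p (lift v) = 0) : kleinMap x ≠ v := fun hxv => by
  rw [mink_lift_kleinMap p hx, hxv, hv, mul_zero] at h
  exact h rfl

/-- The Klein projection is injective on vectors with a fixed nonzero pairing. -/
lemma eq_of_kleinMap_eq {x y p : Fin (n + 1) → ℝ} (hx : x 0 ≠ 0) (hy : y 0 ≠ 0)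
    (hxy : mink p x = mink p y) (h : mink p x ≠ 0) (hk : kleinMap x = kleinMap y) : x = y := by
  have h1 := mink_lift_kleinMap p hx
  have h2 := mink_lift_kleinMap p hy
  rw [hk] at h1
  have hne : mink p (lift (kleinMap y)) ≠ 0 := fun h0 => h (by rw [h1, h0, mul_zero])
  have h3 : x 0 = y 0 := mul_right_cancel₀ hne (by rw [← h1, ← h2, hxy])
  rw [← smul_lift_kleinMap hx, ← smul_lift_kleinMap hy, hk, h3]

/-- The cross-section of a cusp of a finite-volume polyhedron is bounded. -/
lemma IsFacetSystem.eq_smul_of_recession (hS : P.IsFacetSystem S) (hfin : P.verts.Finite)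
    (hv : v ∈ P.idealVerts) {u : Fin (n + 1) → ℝ} (hu : mink u (lift v) = 0)
    (hrec : ∀ k ∈ S, mink (P.e k) (lift v) = 0 → mink (P.e k) u ≤ 0) :
    u = u 0 • lift v := by
  refine (mink_self_nonneg_of_orthogonal_null hv.2 hu).2 ?_
  by_contra! huu
  obtain ⟨z, hz, hkz⟩ := P.exists_strict
  have hpp := mink_lift_of_mem_idealVerts hv
  have hvcl := mink_lift_nonpos_of_mem_cl (mem_idealVerts_iff.1 hv).1
  have hp0 : (lift v : Fin (n + 1) → ℝ) 0 = 1 := lift_zero v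
  generalize lift v = p at *
  have hpz : mink p z < 0 := mink_neg_of_causal hpp.le (by rw [hp0]; exact one_pos) hz
  have hpu : mink p u = 0 := mink_comm u p ▸ hu
  set b := -mink p z with hb
  have hb0 : 0 < b := by linarith
  set s : ℝ → ℝ := fun t => (mink z z + t ^ 2 * mink u u + 2 * t * mink z u) / (2 * b) with hs
  have hsb : ∀ t, s t * b = (mink z z + t ^ 2 * mink u u + 2 * t * mink z u) / 2 := fun t => by
    simp only [hs]; field_simp
  set q : ℝ → Fin (n + 1) → ℝ := fun t => z + t • u + s t • p with hq
  have hqp : ∀ t, mink p (q t) = -b := fun t => by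
    simp only [hq, mink_add_right, mink_smul_right, hpp, hpu, hb]; ring
  have hqq : ∀ t, mink (q t) (q t) = 0 := fun t => by
    simp only [hq, mink_add_right, mink_smul_right, mink_add_left, mink_smul_left, hpp, hpu, hu,
      mink_comm u z, mink_comm z p]
    linear_combination (-2) * hsb t
  have hqz : ∀ t, mink (q t) z < 0 := fun t => by
    have : mink (q t) z = (mink z z - t ^ 2 * mink u u) / 2 := by
      simp only [hq, mink_add_left, mink_smul_left, mink_comm u z]
      linear_combination -hsb t
    rw [this]
    nlinarith [hz.1, mul_nonneg (sq_nonneg t) huu.le]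
  have hq0 : ∀ t, 0 < q t 0 := fun t => zero_coord_pos_of_mink_neg hz (hqq t).le (hqz t)
  have hinj : Function.Injective fun t => kleinMap (q t) := fun t t' htt' => by
    have h1 : q t = q t' := eq_of_kleinMap_eq (p := p) (hq0 t).ne' (hq0 t').ne'
      (by rw [hqp, hqp]) (by rw [hqp]; linarith) htt'
    have h2 : mink u (q t) = mink u (q t') := by rw [h1]
    simp only [hq, mink_add_right, mink_smul_right, hu, mul_zero, add_zero] at h2
    exact mul_right_cancel₀ huu.ne' (by linarith)
  have hev : ∀ᶠ t in Filter.atTop, ∀ k ∈ S, mink (P.e k) (q t) ≤ 0 := by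
    rw [Filter.eventually_all_finset]
    intro k hk
    rcases (hvcl k).eq_or_lt with h0 | hlt
    · filter_upwards [Filter.eventually_ge_atTop 0] with t ht
      simp only [hq, mink_add_right, mink_smul_right, h0]
      nlinarith [hkz k, mul_nonpos_of_nonneg_of_nonpos ht (hrec k hk h0)]
    · set C := -mink (P.e k) p * mink u u / (2 * b) with hC
      have hC0 : 0 < C := div_pos (mul_pos (by linarith) huu) (by linarith)
      set A := mink (P.e k) z + mink (P.e k) p * mink z z / (2 * b) with hA
      set B := mink (P.e k) u + mink (P.e k) p * mink z u / b with hB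
      filter_upwards [Filter.eventually_ge_atTop 1,
        Filter.eventually_ge_atTop ((|A| + |B|) / C)] with t ht1 ht
      have hform : mink (P.e k) (q t) = A + B * t - C * t ^ 2 := by
        simp only [hq, hs, mink_add_right, mink_smul_right, hA, hB, hC]
        field_simp
        ring
      rw [div_le_iff₀ hC0] at ht
      rw [hform]
      nlinarith [le_abs_self A, le_abs_self B, abs_nonneg A, abs_nonneg B,
        mul_le_mul_of_nonneg_right ht (by linarith : (0 : ℝ) ≤ t),
        mul_le_mul_of_nonneg_right (le_abs_self B) (by linarith : (0 : ℝ) ≤ t),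
        mul_le_mul_of_nonneg_left ht1 (abs_nonneg A)]
  obtain ⟨T, hT⟩ := Filter.eventually_atTop.1 hev
  refine Set.infinite_of_injOn_mapsTo (s := Set.Ici T) hinj.injOn (fun t ht => ?_)
    (Set.Ici_infinite T) (hfin.subset fun x hx => hx.1 : P.idealVerts.Finite)
  exact kleinMap_mem_idealVerts hS (hqq t) (hq0 t) (hT t ht)

/-- Distinct non-orthogonal walls through an ideal vertex are parallel. -/
lemma IsFacetSystem.add_eq_smul (hS : P.IsFacetSystem S) (hra : P.IsRightAngled)
    (hv : v ∈ P.idealVerts) {k l : Fin P.m} (hk : k ∈ S) (hl : l ∈ S) (hkl : k ≠ l)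
    (hkv : mink (P.e k) (lift v) = 0) (hlv : mink (P.e l) (lift v) = 0)
    (hne : mink (P.e k) (P.e l) ≠ 0) : ∃ c : ℝ, 0 < c ∧ P.e k + P.e l = c • lift v := by
  have hle := (hS.mink_eq_zero_or_le hra hk hl hkl).resolve_left hne
  have hperp : mink (P.e k + P.e l) (lift v) = 0 := by rw [mink_add_left, hkv, hlv, add_zero]
  have heq := (mink_self_nonneg_of_orthogonal_null hv.2 hperp).2 (by
    rw [mink_add_left, mink_add_right, mink_add_right, P.unit, P.unit, mink_comm (P.e l)]
    linarith)
  refine ⟨_, ?_, heq⟩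
  obtain ⟨z, hz, hkz⟩ := P.exists_strict
  have hpz : mink (lift v) z < 0 :=
    mink_neg_of_causal (mink_lift_of_mem_idealVerts hv).le (by simp) hz
  have h1 : mink (P.e k + P.e l) z = (P.e k + P.e l) 0 * mink (lift v) z := by
    rw [← mink_smul_left, ← heq]
  rw [mink_add_left] at h1
  by_contra! hcon
  nlinarith [hkz k, hkz l]

lemma IsFacetSystem.exists_parallel (hS : P.IsFacetSystem S) (hra : P.IsRightAngled)
    (hfin : P.verts.Finite) (hv : v ∈ P.idealVerts) {k : Fin P.m} (hk : k ∈ S)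
    (hkv : mink (P.e k) (lift v) = 0) :
    ∃ l ∈ S, ∃ c : ℝ, 0 < c ∧ P.e k + P.e l = c • lift v := by
  by_contra! hcon
  have hrec := hS.eq_smul_of_recession hfin hv (u := -P.e k)
    (by rw [mink_neg_left, hkv, neg_zero]) (fun l hl hlv => by
      rw [mink_neg_right]
      rcases eq_or_ne k l with rfl | hkl
      · rw [P.unit]; norm_num
      · by_cases h0 : mink (P.e k) (P.e l) = 0
        · rw [mink_comm, h0, neg_zero]
        · obtain ⟨c, hc, h⟩ := hS.add_eq_smul hra hv hk hl hkl hkv hlv h0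
          exact absurd h (hcon l hl c hc))
  have h1 : mink (-P.e k) (-P.e k) = 1 := by rw [mink_neg_left, mink_neg_right, neg_neg, P.unit]
  rw [hrec, mink_smul_left, mink_smul_right, mink_lift_of_mem_idealVerts hv] at h1
  norm_num at h1

lemma IsFacetSystem.exists_orthogonal (hS : P.IsFacetSystem S) (hra : P.IsRightAngled)
    (hfin : P.verts.Finite) (hv : v ∈ P.idealVerts) (R : Finset (Fin P.m)) (hRS : R ⊆ S)
    (hRv : ∀ i ∈ R, mink (P.e i) (lift v) = 0) (hcard : R.card + 1 < n) :
    ∃ k ∈ S, mink (P.e k) (lift v) = 0 ∧ ∀ i ∈ R, mink (P.e k) (P.e i) = 0 := by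
  let f : (Fin (n + 1) → ℝ) →ₗ[ℝ] (R → ℝ) × ℝ :=
    (LinearMap.pi fun i : R => minkForm (P.e i)).prod (minkForm (lift v))
  obtain ⟨u, hu, hunot⟩ : ∃ u ∈ LinearMap.ker f, u ∉ Submodule.span ℝ {lift v} := by
    by_contra! hcon
    have h1 := Submodule.finrank_mono (show LinearMap.ker f ≤ Submodule.span ℝ {lift v} from hcon)
    have h2 := finrank_span_le_card (R := ℝ) ({lift v} : Set (Fin (n + 1) → ℝ))
    have h3 := f.finrank_range_add_finrank_ker
    have h4 := (LinearMap.range f).finrank_le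
    simp at h2 h3 h4
    omega
  have huR : ∀ i ∈ R, mink (P.e i) u = 0 := fun i hi =>
    congrFun (congrArg Prod.fst hu) ⟨i, hi⟩
  have huv : mink u (lift v) = 0 := by
    rw [mink_comm]; exact congrArg Prod.snd hu
  by_contra! hcon
  refine hunot ?_
  rw [hS.eq_smul_of_recession hfin hv huv fun k hk hkv => ?_]
  · exact Submodule.smul_mem _ _ (Submodule.mem_span_singleton_self _)
  · obtain ⟨i, hi, hne⟩ := hcon k hk hkv
    rcases eq_or_ne k i with rfl | hki
    · exact (huR k hi).le
    · obtain ⟨c, -, h⟩ := hS.add_eq_smul hra hv hk (hRS hi) hki hkv (hRv i hi) hne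
      have h1 : mink (P.e k + P.e i) u = 0 := by
        rw [h, mink_smul_left, mink_comm, huv, mul_zero]
      rw [mink_add_left, huR i hi, add_zero] at h1
      exact h1.le

end Cusp

section Box

variable {P : HypPolyhedron 5} {S : Finset (Fin P.m)} {v : EuclideanSpace ℝ (Fin 5)}

/-- The walls through an ideal vertex `v` bounding a box: `N i true` and `N i false` are parallel,
at distance measured by `c i`, and all other pairs are orthogonal. -/
structure IsBox (P : HypPolyhedron 5) (S : Finset (Fin P.m)) (v : EuclideanSpace ℝ (Fin 5))
    (N : Fin 4 → Bool → Fin P.m) (c : Fin 4 → ℝ) : Prop where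
  mem : ∀ i s, N i s ∈ S
  mink_vertex : ∀ i s, mink (P.e (N i s)) (lift v) = 0
  orthogonal : ∀ i j s t, i ≠ j → mink (P.e (N i s)) (P.e (N j t)) = 0
  pos : ∀ i, 0 < c i
  add_eq : ∀ i s, P.e (N i s) + P.e (N i !s) = c i • lift v

lemma IsFacetSystem.exists_isBox (hS : P.IsFacetSystem S) (hra : P.IsRightAngled)
    (hfin : P.verts.Finite) (hv : v ∈ P.idealVerts) : ∃ N c, P.IsBox S v N c := by
  classical
  obtain ⟨a₀, h₀, h₀v, -⟩ := hS.exists_orthogonal hra hfin hv ∅ (by simp) (by simp) (by simp)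
  obtain ⟨a₁, h₁, h₁v, ho₁⟩ := hS.exists_orthogonal hra hfin hv {a₀} (by simpa using h₀)
    (by simpa using h₀v) (by simp)
  obtain ⟨a₂, h₂, h₂v, ho₂⟩ := hS.exists_orthogonal hra hfin hv {a₀, a₁}
    (by simp [Finset.insert_subset_iff, h₀, h₁]) (by simp [h₀v, h₁v])
    (by have := Finset.card_le_two (a := a₀) (b := a₁); omega)
  obtain ⟨a₃, h₃, h₃v, ho₃⟩ := hS.exists_orthogonal hra hfin hv {a₀, a₁, a₂}
    (by simp [Finset.insert_subset_iff, h₀, h₁, h₂]) (by simp [h₀v, h₁v, h₂v])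
    (by have := Finset.card_le_three (a := a₀) (b := a₁) (c := a₂); omega)
  simp only [Finset.mem_insert, Finset.mem_singleton, forall_eq_or_imp, forall_eq] at ho₁ ho₂ ho₃
  set a : Fin 4 → Fin P.m := ![a₀, a₁, a₂, a₃] with ha
  have haS : ∀ i, a i ∈ S := by simp [Fin.forall_fin_succ, ha, h₀, h₁, h₂, h₃]
  have hav : ∀ i, mink (P.e (a i)) (lift v) = 0 := by
    simp [Fin.forall_fin_succ, ha, h₀v, h₁v, h₂v, h₃v]
  have hao : ∀ i j, i ≠ j → mink (P.e (a i)) (P.e (a j)) = 0 := by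
    have : ∀ i j, i < j → mink (P.e (a j)) (P.e (a i)) = 0 := by
      simp [Fin.forall_fin_succ, ha, ho₁, ho₂, ho₃]
    intro i j hij
    rcases hij.lt_or_gt with h | h
    · rw [mink_comm]; exact this i j h
    · exact this j i h
  choose b hbS c hc hbc using fun i => hS.exists_parallel hra hfin hv (haS i) (hav i)
  have hb : ∀ i, P.e (b i) = c i • lift v - P.e (a i) := fun i => eq_sub_of_add_eq' (hbc i)
  have hvv := mink_lift_of_mem_idealVerts hv
  have hva : ∀ i, mink (lift v) (P.e (a i)) = 0 := fun i => mink_comm (lift v) _ ▸ hav i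
  refine ⟨fun i s => if s then a i else b i, c, ?_, ?_, ?_, hc, ?_⟩
  · rintro i (_ | _) <;> simp [haS, hbS]
  · rintro i (_ | _) <;> simp [hb, mink_sub_left, mink_smul_left, hav, hvv]
  · rintro i j (_ | _) (_ | _) hij <;>
      simp [hb, mink_sub_left, mink_smul_left, mink_sub_right, mink_smul_right, hav, hva, hvv,
        hao i j hij]
  · rintro i (_ | _) <;> simp [hb]

variable {N : Fin 4 → Bool → Fin P.m} {c : Fin 4 → ℝ}

/-- A null vector normalized against an ideal vertex and orthogonal to one corner of the box. -/
lemma IsBox.exists_origin (hN : P.IsBox S v N c) (hv : v ∈ P.idealVerts) :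
    ∃ q : Fin 6 → ℝ, mink q q = 0 ∧ mink (lift v) q = -1 ∧
      ∀ i, mink (P.e (N i true)) q = 0 := by
  obtain ⟨z, hz, -⟩ := P.exists_strict
  have hvv := mink_lift_of_mem_idealVerts hv
  have hpz : mink (lift v) z < 0 := mink_neg_of_causal hvv.le (by simp) hz
  set y := z - ∑ i, mink (P.e (N i true)) z • P.e (N i true) with hy
  have hpy : mink (lift v) y = mink (lift v) z := by
    rw [hy, mink_sub_right, mink_sum_right, Finset.sum_eq_zero, sub_zero]
    intro i _
    rw [mink_smul_right, mink_comm (lift v), hN.mink_vertex, mul_zero]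
  have hiy : ∀ i, mink (P.e (N i true)) y = 0 := fun i => by
    rw [hy, mink_sub_right, mink_sum_right, Finset.sum_eq_single i, mink_smul_right, P.unit]
    · ring
    · intro j _ hji
      rw [mink_smul_right, hN.orthogonal i j _ _ hji.symm, mul_zero]
    · simp
  set h := mink (lift v) z with hh
  have hne : h ≠ 0 := hpz.ne
  refine ⟨(-h⁻¹) • (y - (mink y y / (2 * h)) • lift v), ?_, ?_, fun i => ?_⟩
  · simp only [mink_smul_left, mink_smul_right, mink_sub_left, mink_sub_right, hvv,
      mink_comm y (lift v), hpy]
    field_simp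
    ring
  · simp only [mink_smul_right, mink_sub_right, hvv, hpy]
    field_simp
    ring
  · simp only [mink_smul_right, mink_sub_right, hiy, hN.mink_vertex]
    ring

/-- The null vector with horospherical coordinates `Y` about the ideal vertex `v`. -/
def boundaryPoint (P : HypPolyhedron 5) (v : EuclideanSpace ℝ (Fin 5))
    (N : Fin 4 → Bool → Fin P.m) (q : Fin 6 → ℝ) (Y : Fin 4 → ℝ) : Fin 6 → ℝ :=
  q + ∑ i, Y i • P.e (N i true) + ((∑ i, Y i ^ 2) / 2) • lift v

variable {q : Fin 6 → ℝ}

lemma IsBox.mink_vertex_boundaryPoint (hN : P.IsBox S v N c) (hv : v ∈ P.idealVerts)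
    (hqv : mink (lift v) q = -1) (Y : Fin 4 → ℝ) :
    mink (lift v) (P.boundaryPoint v N q Y) = -1 := by
  rw [boundaryPoint, mink_add_right, mink_add_right, mink_smul_right, mink_sum_right,
    mink_lift_of_mem_idealVerts hv, hqv, Finset.sum_eq_zero]
  · ring
  · intro i _
    rw [mink_smul_right, mink_comm, hN.mink_vertex, mul_zero]

lemma IsBox.mink_wall_boundaryPoint (hN : P.IsBox S v N c)
    (hq : ∀ i, mink (P.e (N i true)) q = 0) (Y : Fin 4 → ℝ) (i : Fin 4) :
    mink (P.e (N i true)) (P.boundaryPoint v N q Y) = Y i := by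
  rw [boundaryPoint, mink_add_right, mink_add_right, mink_smul_right, mink_sum_right, hq,
    hN.mink_vertex, Finset.sum_eq_single i, mink_smul_right, P.unit]
  · ring
  · intro j _ hji
    rw [mink_smul_right, hN.orthogonal i j _ _ hji.symm, mul_zero]
  · simp

lemma IsBox.mink_opposite_boundaryPoint (hN : P.IsBox S v N c) (hv : v ∈ P.idealVerts)
    (hqv : mink (lift v) q = -1) (hq : ∀ i, mink (P.e (N i true)) q = 0) (Y : Fin 4 → ℝ)
    (i : Fin 4) : mink (P.e (N i false)) (P.boundaryPoint v N q Y) = -c i - Y i := by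
  have : P.e (N i false) = c i • lift v - P.e (N i true) := eq_sub_of_add_eq' (hN.add_eq i true)
  rw [this, mink_sub_left, mink_smul_left, hN.mink_vertex_boundaryPoint hv hqv,
    hN.mink_wall_boundaryPoint hq]
  ring

lemma IsBox.mink_boundaryPoint_self (hN : P.IsBox S v N c) (hv : v ∈ P.idealVerts)
    (hqq : mink q q = 0) (hqv : mink (lift v) q = -1)
    (hq : ∀ i, mink (P.e (N i true)) q = 0) (Y : Fin 4 → ℝ) :
    mink (P.boundaryPoint v N q Y) (P.boundaryPoint v N q Y) = 0 := by
  have hQq : mink q (P.boundaryPoint v N q Y) = -((∑ i, Y i ^ 2) / 2) := by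
    rw [boundaryPoint, mink_add_right, mink_add_right, mink_smul_right, mink_sum_right, hqq,
      mink_comm q (lift v), hqv, Finset.sum_eq_zero]
    · ring
    · intro i _
      rw [mink_smul_right, mink_comm, hq, mul_zero]
  have hexp : ∀ x, mink (P.boundaryPoint v N q Y) x = mink q x +
      ∑ i, mink (Y i • P.e (N i true)) x + (∑ i, Y i ^ 2) / 2 * mink (lift v) x := fun x => by
    rw [boundaryPoint, mink_add_left, mink_add_left, mink_smul_left, mink_sum_left]
  rw [hexp, hQq, hN.mink_vertex_boundaryPoint hv hqv]
  have : ∑ i, mink (Y i • P.e (N i true)) (P.boundaryPoint v N q Y) = ∑ i, Y i ^ 2 :=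
    Finset.sum_congr rfl fun i _ => by
      rw [mink_smul_left, hN.mink_wall_boundaryPoint hq, sq]
  rw [this]
  ring

lemma IsBox.boundaryPoint_zero_pos (hN : P.IsBox S v N c) (hv : v ∈ P.idealVerts)
    (hqq : mink q q = 0) (hqv : mink (lift v) q = -1)
    (hq : ∀ i, mink (P.e (N i true)) q = 0) (Y : Fin 4 → ℝ) :
    0 < P.boundaryPoint v N q Y 0 := by
  by_contra! hcon
  have h1 := mink_nonpos_of_causal (x := lift v) (y := -P.boundaryPoint v N q Y)
    (mink_lift_of_mem_idealVerts hv).le (by simp)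
    (by rw [mink_neg_left, mink_neg_right, hN.mink_boundaryPoint_self hv hqq hqv hq]; simp)
    (by simpa using hcon)
  rw [mink_neg_right, hN.mink_vertex_boundaryPoint hv hqv] at h1
  norm_num at h1

/-- Every wall through the ideal vertex is a wall of the box. -/
lemma IsBox.exists_eq (hN : P.IsBox S v N c) (hS : P.IsFacetSystem S) (hra : P.IsRightAngled)
    (hv : v ∈ P.idealVerts) (hqq : mink q q = 0) (hqv : mink (lift v) q = -1)
    (hq : ∀ i, mink (P.e (N i true)) q = 0) {k : Fin P.m} (hk : k ∈ S)
    (hkv : mink (P.e k) (lift v) = 0) : ∃ i s, k = N i s := by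
  by_contra! hcon
  have hvv := mink_lift_of_mem_idealVerts hv
  have horth : ∀ i, mink (P.e (N i true)) (P.e k) = 0 := fun i => by
    have h1 := hS.mink_nonpos hra hk (hN.mem i true) (hcon i true)
    have h2 := hS.mink_nonpos hra hk (hN.mem i false) (hcon i false)
    have h3 : mink (P.e k) (P.e (N i true) + P.e (N i false)) = 0 := by
      rw [show P.e (N i true) + P.e (N i false) = c i • lift v from hN.add_eq i true,
        mink_smul_right, hkv, mul_zero]
    rw [mink_add_right] at h3
    rw [mink_comm]
    linarith
  let f : (Fin 6 → ℝ) →ₗ[ℝ] (Fin 4 → ℝ) × ℝ × ℝ :=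
    (LinearMap.pi fun i => minkForm (P.e (N i true))).prod ((minkForm (lift v)).prod (minkForm q))
  have hsurj : Function.Surjective f := by
    rintro ⟨Y, s, t⟩
    have hsum : ∀ x : Fin 6 → ℝ, mink x (∑ i, Y i • P.e (N i true)) =
        ∑ i, Y i * mink x (P.e (N i true)) := fun x => by
      rw [mink_sum_right]
      exact Finset.sum_congr rfl fun i _ => mink_smul_right _ _ _
    refine ⟨∑ i, Y i • P.e (N i true) - t • lift v - s • q, Prod.ext (funext fun i => ?_)
      (Prod.ext ?_ ?_)⟩
    · change mink (P.e (N i true)) _ = Y i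
      rw [mink_sub_right, mink_sub_right, mink_smul_right, mink_smul_right, hsum, hN.mink_vertex,
        hq, Finset.sum_eq_single i, P.unit]
      · ring
      · intro j _ hji
        rw [hN.orthogonal i j _ _ hji.symm, mul_zero]
      · simp
    · change mink (lift v) _ = s
      rw [mink_sub_right, mink_sub_right, mink_smul_right, mink_smul_right, hsum, hvv, hqv,
        Finset.sum_eq_zero]
      · ring
      · intro i _
        rw [mink_comm, hN.mink_vertex, mul_zero]
    · change mink q _ = t
      rw [mink_sub_right, mink_sub_right, mink_smul_right, mink_smul_right, hsum, hqq,
        mink_comm q (lift v), hqv, Finset.sum_eq_zero]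
      · ring
      · intro i _
        rw [mink_comm, hq, mul_zero]
  have hinj : Function.Injective f :=
    (LinearMap.injective_iff_surjective_of_finrank_eq_finrank (by simp)).2 hsurj
  have hzero : P.e k + mink q (P.e k) • lift v = 0 := by
    refine hinj ?_
    rw [map_zero]
    refine Prod.ext (funext fun i => ?_) (Prod.ext ?_ ?_)
    · change mink (P.e (N i true)) _ = 0
      rw [mink_add_right, mink_smul_right, horth, hN.mink_vertex, mul_zero, add_zero]
    · change mink (lift v) _ = 0
      rw [mink_add_right, mink_smul_right, hvv, mink_comm, hkv, mul_zero, add_zero]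
    · change mink q _ = 0
      rw [mink_add_right, mink_smul_right, mink_comm q (lift v), hqv]
      ring
  have h1 := P.unit k
  rw [eq_neg_of_add_eq_zero_left hzero, mink_neg_left, mink_neg_right, mink_smul_left,
    mink_smul_right, hvv] at h1
  norm_num at h1

/-- The coordinates of the corner of the box in the direction `σ`. -/
def corner (c : Fin 4 → ℝ) (σ : Fin 4 → Bool) (i : Fin 4) : ℝ := if σ i then 0 else -c i

lemma IsBox.mink_corner (hN : P.IsBox S v N c) (hv : v ∈ P.idealVerts)
    (hqv : mink (lift v) q = -1) (hq : ∀ i, mink (P.e (N i true)) q = 0) (σ : Fin 4 → Bool)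
    (i : Fin 4) :
    mink (P.e (N i (σ i))) (P.boundaryPoint v N q (corner c σ)) = 0 := by
  cases h : σ i
  · rw [hN.mink_opposite_boundaryPoint hv hqv hq]; simp [corner, h]
  · rw [hN.mink_wall_boundaryPoint hq]; simp [corner, h]

lemma IsBox.mink_nonpos_of_mem_box (hN : P.IsBox S v N c) (hv : v ∈ P.idealVerts)
    (hqv : mink (lift v) q = -1) (hq : ∀ i, mink (P.e (N i true)) q = 0) {Y : Fin 4 → ℝ}
    (h0 : ∀ i, Y i ≤ 0) (hc : ∀ i, -c i ≤ Y i) (i : Fin 4) (s : Bool) :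
    mink (P.e (N i s)) (P.boundaryPoint v N q Y) ≤ 0 := by
  cases s
  · rw [hN.mink_opposite_boundaryPoint hv hqv hq]; linarith [hc i]
  · rw [hN.mink_wall_boundaryPoint hq]; exact h0 i

/-- A wall cutting off a corner of the box is orthogonal to the walls meeting at that corner. -/
lemma IsBox.orthogonal_of_corner (hN : P.IsBox S v N c) (hS : P.IsFacetSystem S)
    (hra : P.IsRightAngled) (hv : v ∈ P.idealVerts) (hqq : mink q q = 0)
    (hqv : mink (lift v) q = -1) (hq : ∀ i, mink (P.e (N i true)) q = 0) (σ : Fin 4 → Bool)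
    {k : Fin P.m} (hk : k ∈ S)
    (hpos : 0 < mink (P.e k) (P.boundaryPoint v N q (corner c σ))) :
    mink (P.e k) (lift v) < 0 ∧ ∀ i, mink (P.e k) (P.e (N i (σ i))) = 0 := by
  have hkv : mink (P.e k) (lift v) < 0 := by
    refine (mink_lift_nonpos_of_mem_cl (mem_idealVerts_iff.1 hv).1 k).lt_of_ne fun h0 => ?_
    obtain ⟨i, s, rfl⟩ := hN.exists_eq hS hra hv hqq hqv hq hk h0
    have := hN.mink_nonpos_of_mem_box hv hqv hq (Y := corner c σ)
      (fun i => by have := hN.pos i; simp only [corner]; split_ifs <;> linarith)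
      (fun i => by have := hN.pos i; simp only [corner]; split_ifs <;> linarith) i s
    linarith
  refine ⟨hkv, fun i => ?_⟩
  set Q := P.boundaryPoint v N q (corner c σ) with hQ
  set s := mink (P.e k) Q / -mink (P.e k) (lift v) with hs
  have hs0 : 0 < s := div_pos hpos (by linarith)
  have hQQ : mink Q Q = 0 := hN.mink_boundaryPoint_self hv hqq hqv hq _
  have hvQ : mink (lift v) Q = -1 := hN.mink_vertex_boundaryPoint hv hqv _
  have hx : Q + s • lift v ∈ ForwardCone 5 := by
    constructor
    · simp only [mink_add_left, mink_add_right, mink_smul_left, mink_smul_right,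
        mink_comm Q (lift v), mink_lift_of_mem_idealVerts hv, hvQ, hQQ]
      linarith
    · have := hN.boundaryPoint_zero_pos hv hqq hqv hq (corner c σ)
      simp only [Pi.add_apply, Pi.smul_apply, lift_zero, smul_eq_mul, mul_one]
      linarith
  refine hS.orthogonal_of_common_point hra hk (hN.mem i _) ?_ hx ?_ ?_
  · rintro rfl
    exact hkv.ne (hN.mink_vertex _ _)
  · have := hkv.ne
    rw [mink_add_right, mink_smul_right, hs]
    field_simp
    ring
  · rw [mink_add_right, mink_smul_right, hN.mink_vertex, hQ, hN.mink_corner hv hqv hq]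
    ring

/-- A wall orthogonal to the walls meeting at a corner does not cut off the centre of the box. -/
lemma IsBox.mink_center_nonpos (hN : P.IsBox S v N c) (hS : P.IsFacetSystem S)
    (hra : P.IsRightAngled) (hv : v ∈ P.idealVerts) (hqq : mink q q = 0)
    (hqv : mink (lift v) q = -1) (hq : ∀ i, mink (P.e (N i true)) q = 0) (σ : Fin 4 → Bool)
    {k : Fin P.m} (hk : k ∈ S) (hkv : mink (P.e k) (lift v) < 0)
    (horth : ∀ i, mink (P.e k) (P.e (N i (σ i))) = 0) :
    mink (P.e k) (P.boundaryPoint v N q fun i => -c i / 2) ≤ 0 := by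
  have hvv := mink_lift_of_mem_idealVerts hv
  set Q := P.boundaryPoint v N q (corner c σ) with hQ
  have hQQ : mink Q Q = 0 := hN.mink_boundaryPoint_self hv hqq hqv hq _
  have hvQ : mink (lift v) Q = -1 := hN.mink_vertex_boundaryPoint hv hqv _
  set h := -mink (P.e k) (lift v) with hh
  set m := mink (P.e k) Q with hm
  have hh0 : 0 < h := by linarith
  have hkv' : mink (lift v) (P.e k) = -h := by rw [mink_comm, hh, neg_neg]
  -- The component of the normal orthogonal to the hyperbolic plane of `v` and `Q` is spacelike.
  have hhm : 2 * h * m ≤ 1 := by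
    have h1 := (mink_self_nonneg_of_orthogonal_null hv.2 (x := P.e k - h • Q + m • lift v) (by
      simp only [mink_add_left, mink_sub_left, mink_smul_left, hvv, mink_comm Q (lift v), hvQ,
        mink_comm (P.e k) (lift v), hkv']
      ring)).1
    simp only [mink_add_left, mink_sub_left, mink_smul_left, mink_add_right, mink_sub_right,
      mink_smul_right, hvv, mink_comm Q (lift v), hvQ, mink_comm (P.e k) (lift v), hkv', hQQ,
      P.unit, mink_comm Q (P.e k), ← hm] at h1
    linarith
  have hother : ∀ i, mink (P.e k) (P.e (N i !(σ i))) = -(h * c i) := fun i => by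
    rw [show P.e (N i !(σ i)) = c i • lift v - P.e (N i (σ i)) from
      eq_sub_of_add_eq' (hN.add_eq i (σ i)), mink_sub_right, horth, mink_smul_right, hh]
    ring
  have hhc : ∀ i, 1 ≤ h * c i := fun i => by
    have hpos := mul_pos hh0 (hN.pos i)
    rcases hS.mink_eq_zero_or_le hra hk (hN.mem i !(σ i)) (by
      rintro rfl; exact hkv.ne (hN.mink_vertex _ _)) with h0 | hle
    · rw [hother] at h0; linarith
    · rw [hother] at hle; linarith
  have htrue : ∀ i, mink (P.e k) (P.e (N i true)) = if σ i then 0 else -(h * c i) := fun i => by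
    have h1 := horth i
    have h2 := hother i
    cases hσ : σ i <;> simp_all
  have hdiff : mink (P.e k) (P.boundaryPoint v N q fun i => -c i / 2) =
      m - h * (∑ i, c i ^ 2) / 8 := by
    rw [hm, hQ, boundaryPoint, boundaryPoint]
    simp only [mink_add_right, mink_smul_right, mink_sum_right, htrue,
      mink_comm (P.e k) (lift v), hkv']
    simp only [Fin.sum_univ_four, corner]
    split_ifs <;> ring
  have hsq : ∀ i, 1 ≤ h ^ 2 * c i ^ 2 := fun i => by
    rw [← mul_pow]; exact one_le_pow₀ (hhc i)
  have hsum : 4 ≤ h ^ 2 * ∑ i, c i ^ 2 := by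
    rw [Fin.sum_univ_four]
    linarith [hsq 0, hsq 1, hsq 2, hsq 3]
  rw [hdiff]
  by_contra! hcon
  nlinarith [mul_pos hh0 hcon]

lemma IsBox.injective (hN : P.IsBox S v N c) : Function.Injective (Function.uncurry N) := by
  rintro ⟨i, s⟩ ⟨j, t⟩ h
  have h : N i s = N j t := h
  have hu := P.unit (N i s)
  have hij : i = j := by
    by_contra hij
    have := hN.orthogonal i j s t hij
    rw [← h, hu] at this
    exact one_ne_zero this
  subst hij
  by_contra hst
  have ht : t = !s := by cases s <;> cases t <;> simp_all
  subst ht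
  have h1 := hN.add_eq i s
  rw [← h, ← two_smul ℝ] at h1
  have h2 : mink ((2 : ℝ) • P.e (N i s)) (P.e (N i s)) = 0 := by
    rw [h1, mink_smul_left, mink_comm, hN.mink_vertex, mul_zero]
  rw [mink_smul_left, hu] at h2
  norm_num at h2

theorem IsFacetSystem.le_card_add_vInf (hS : P.IsFacetSystem S) (hra : P.IsRightAngled)
    (hfin : P.verts.Finite) (hv : v ∈ P.idealVerts) : 26 ≤ S.card + P.vInf := by
  classical
  obtain ⟨N, c, hN⟩ := hS.exists_isBox hra hfin hv
  obtain ⟨q, hqq, hqv, hq⟩ := hN.exists_origin hv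
  have hvv := mink_lift_of_mem_idealVerts hv
  set Q := P.boundaryPoint v N q with hQ
  have hQ0 := hN.boundaryPoint_zero_pos hv hqq hqv hq
  have hvQ := hN.mink_vertex_boundaryPoint hv hqv
  have hQv : ∀ Y, kleinMap (Q Y) ≠ v := fun Y =>
    kleinMap_ne_of_mink_ne_zero (p := lift v) (hQ0 Y).ne' (by rw [hvQ]; norm_num) hvv
  have hQinj : ∀ Y Y', kleinMap (Q Y) = kleinMap (Q Y') → Y = Y' := fun Y Y' h => by
    have h1 := eq_of_kleinMap_eq (p := lift v) (hQ0 Y).ne' (hQ0 Y').ne' (by rw [hvQ, hvQ])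
      (by rw [hvQ]; norm_num) h
    funext i
    rw [← hN.mink_wall_boundaryPoint hq Y i, ← hN.mink_wall_boundaryPoint hq Y' i, h1]
  have hideal : ∀ Y, (∀ k ∈ S, mink (P.e k) (Q Y) ≤ 0) → kleinMap (Q Y) ∈ P.idealVerts :=
    fun Y h => kleinMap_mem_idealVerts hS (hN.mink_boundaryPoint_self hv hqq hqv hq Y) (hQ0 Y) h
  have hcornerinj : Function.Injective (corner c) := fun σ τ h => by
    funext i
    have h1 := congrFun h i
    have h2 := (hN.pos i).ne'
    cases hσ : σ i <;> cases hτ : τ i <;> simp_all [corner]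
  have hcenter : ∀ σ, corner c σ ≠ fun i => -c i / 2 := fun σ h => by
    have h1 := congrFun h 0
    have h2 := hN.pos 0
    simp only [corner] at h1
    split_ifs at h1 <;> linarith
  have hIfin : P.idealVerts.Finite := hfin.subset fun x hx => hx.1
  -- Every corner is either cut off by a wall centred there or an ideal vertex.
  have hcorner : ∀ σ : Fin 4 → Bool, ∃ t : Fin P.m ⊕ EuclideanSpace ℝ (Fin 5),
      (∃ k ∈ S, t = Sum.inl k ∧ mink (P.e k) (lift v) < 0 ∧
        ∀ i, mink (P.e k) (P.e (N i (σ i))) = 0) ∨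
      (t = Sum.inr (kleinMap (Q (corner c σ))) ∧ kleinMap (Q (corner c σ)) ∈ P.idealVerts) := by
    intro σ
    by_cases h : ∀ k ∈ S, mink (P.e k) (Q (corner c σ)) ≤ 0
    · exact ⟨_, Or.inr ⟨rfl, hideal _ h⟩⟩
    · push Not at h
      obtain ⟨k, hk, hpos⟩ := h
      exact ⟨_, Or.inl ⟨k, hk, rfl, hN.orthogonal_of_corner hS hra hv hqq hqv hq σ hk hpos⟩⟩
  choose g hg using hcorner
  have hginj : Function.Injective g := fun σ τ h => by
    rcases hg σ with ⟨k, hk, hgk, hkv, hko⟩ | ⟨hgQ, -⟩ <;>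
      rcases hg τ with ⟨l, hl, hgl, hlv, hlo⟩ | ⟨hgQ', -⟩
    · obtain rfl : k = l := Sum.inl_injective (by rw [← hgk, ← hgl, h])
      funext i
      by_contra hne
      have h1 : τ i = !(σ i) := by cases hσ : σ i <;> cases hτ : τ i <;> simp_all
      have h2 := congrArg (mink (P.e k)) (hN.add_eq i (σ i))
      rw [mink_add_right, ← h1, hko, hlo, mink_smul_right] at h2
      have := mul_neg_of_pos_of_neg (hN.pos i) hkv
      linarith
    · rw [hgk, hgQ'] at h; cases h
    · rw [hgQ, hgl] at h; cases h
    · rw [hgQ, hgQ'] at h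
      exact hcornerinj (hQinj _ _ (Sum.inr_injective h))
  set f : (Fin 4 × Bool) ⊕ (Fin 4 → Bool) → Fin P.m ⊕ EuclideanSpace ℝ (Fin 5) :=
    Sum.elim (fun x => Sum.inl (Function.uncurry N x)) g with hf
  have hfinj : Function.Injective f := by
    refine Function.Injective.sumElim (Sum.inl_injective.comp hN.injective) hginj ?_
    rintro ⟨i, s⟩ σ h
    rcases hg σ with ⟨k, -, hgk, hkv, -⟩ | ⟨hgQ, -⟩
    · rw [hgk] at h
      obtain rfl : N i s = k := Sum.inl_injective h
      exact hkv.ne (hN.mink_vertex i s)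
    · rw [hgQ] at h; cases h
  set U : Finset (Fin P.m ⊕ EuclideanSpace ℝ (Fin 5)) := S.disjSum hIfin.toFinset with hU
  have hfU : ∀ x, f x ∈ U := by
    rintro (⟨i, s⟩ | σ)
    · exact Finset.inl_mem_disjSum.2 (hN.mem i s)
    · change g σ ∈ U
      rcases hg σ with ⟨k, hk, hgk, -, -⟩ | ⟨hgQ, hmem⟩
      · rw [hgk]; exact Finset.inl_mem_disjSum.2 hk
      · rw [hgQ]; exact Finset.inr_mem_disjSum.2 (hIfin.mem_toFinset.2 hmem)
  have hfv : ∀ x, f x ≠ Sum.inr v := by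
    rintro (⟨i, s⟩ | σ) h
    · cases h
    · have h : g σ = Sum.inr v := h
      rcases hg σ with ⟨k, hk, hgk, -, -⟩ | ⟨hgQ, hmem⟩
      · rw [hgk] at h; cases h
      · rw [hgQ] at h; exact hQv _ (Sum.inr_injective h)
  -- Either there is a further wall, or the centre of the box is a further ideal vertex.
  obtain ⟨t, htU, htv, htf⟩ : ∃ t ∈ U, t ≠ Sum.inr v ∧ ∀ x, f x ≠ t := by
    by_cases h : ∃ k ∈ S, ∀ x, f x ≠ Sum.inl k
    · obtain ⟨k, hk, hkf⟩ := h
      exact ⟨Sum.inl k, Finset.inl_mem_disjSum.2 hk, by simp, hkf⟩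
    · push Not at h
      refine ⟨Sum.inr (kleinMap (Q fun i => -c i / 2)), Finset.inr_mem_disjSum.2
        (hIfin.mem_toFinset.2 (hideal _ fun k hk => ?_)), fun h => hQv _ (Sum.inr_injective h), ?_⟩
      · obtain ⟨⟨i, s⟩ | σ, hx⟩ := h k hk
        · obtain rfl : N i s = k := Sum.inl_injective hx
          exact hN.mink_nonpos_of_mem_box hv hqv hq (fun i => by linarith [hN.pos i])
            (fun i => by linarith [hN.pos i]) i s
        · have hx : g σ = Sum.inl k := hx
          rcases hg σ with ⟨l, hl, hgl, hlv, hlo⟩ | ⟨hgQ, -⟩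
          · obtain rfl : l = k := Sum.inl_injective (hgl.symm.trans hx)
            exact hN.mink_center_nonpos hS hra hv hqq hqv hq σ hl hlv hlo
          · rw [hgQ] at hx; cases hx
      · rintro (⟨i, s⟩ | σ) hx
        · cases hx
        · have hx : g σ = _ := hx
          rcases hg σ with ⟨l, hl, hgl, -, -⟩ | ⟨hgQ, -⟩
          · rw [hgl] at hx; cases hx
          · rw [hgQ] at hx
            exact hcenter σ (hQinj _ _ (Sum.inr_injective hx))
  have hsub : insert t (insert (Sum.inr v) (Finset.univ.image f)) ⊆ U := by
    simp only [Finset.insert_subset_iff, Finset.image_subset_iff]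
    exact ⟨htU, Finset.inr_mem_disjSum.2 (hIfin.mem_toFinset.2 hv), fun x _ => hfU x⟩
  have hcard := Finset.card_le_card hsub
  rw [Finset.card_insert_of_notMem (by simp [htv, htf]),
    Finset.card_insert_of_notMem (by simp only [Finset.mem_image, not_exists, not_and];
                                     exact fun x _ => hfv x),
    Finset.card_image_of_injective _ hfinj, hU, Finset.card_disjSum,
    ← Set.ncard_eq_toFinset_card _ hIfin] at hcard
  simpa [vInf] using hcard

end Box

/-- A non-compact finite-volume right-angled `5`-polyhedron satisfies `ν(P) ≥ 26`. -/
theorem le_a_add_vInf (P : HypPolyhedron 5) (hfv : P.FiniteVolume) (hra : P.IsRightAngled)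
    (hnc : ¬ P.IsCompactPoly) : 26 ≤ P.a 4 + P.vInf := by
  obtain ⟨S, hS⟩ := P.exists_isFacetSystem
  obtain ⟨v, hv, hnorm⟩ : ∃ v ∈ P.verts, 1 ≤ ‖v‖ := by
    by_contra! hcon
    exact hnc ⟨hfv, hcon⟩
  have hvI : v ∈ P.idealVerts :=
    ⟨hv, le_antisymm (norm_le_one_of_mem_cl (hv.subset rfl)) hnorm⟩
  have h1 := hS.le_card_add_vInf hra hfv.1 hvI
  have h2 := hS.card_le_a hfv
  simp only [Nat.reduceSub] at h2
  omega

end HypPolyhedron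

/-- For every finite-volume non-compact right-angled convex hyperbolic `5`-polyhedron,
`ν(P) = a₄(P) + v_∞(P) ≥ 26`; in particular `ν₅ ≥ 26`. -/
theorem nu_five (P : HypPolyhedron 5) (hfv : P.FiniteVolume) (hra : P.IsRightAngled)
    (hnc : ¬ P.IsCompactPoly) :
    26 ≤ P.a 4 + P.vInf ∧ 26 ≤ nu 5 := by
  refine ⟨P.le_a_add_vInf hfv hra hnc, ?_⟩
  obtain ⟨P', hfv', hra', hnc', h⟩ : nu 5 ∈ nuSet 5 :=
    Nat.sInf_mem ⟨_, P, hfv, hra, hnc, rfl⟩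
  exact h ▸ P'.le_a_add_vInf hfv' hra' hnc'
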